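/- arXiv:1910.12473 — 3 statements merged into one kernel-verified Lean document; each statement's English description precedes it below -/
import Mathlib

section
/- Let q and m be positive integers and let k ∈ {4q-1, 4q, 4q+1, 4q+2}. Then every series-parallel graph G with girth at least k is (⌈(2 + 1/q)m⌉, m)-choosable: for every list assignment L with |L(v)| = ⌈(2 + 1/q)m⌉ for all vertices v, there exists an m-fold L-colouring of G. -/
open SimpleGraph

/-- A two-terminal graph: a simple graph together with two terminal vertices. -/
structure TTGraph where
  V : Type
  G : SimpleGraph V
  x : V
  y : V

/-- Vertex type of the parallel composition. -/
def TTGraph.pV (A B : TTGraph) : Type := A.V ⊕ {v : B.V // v ≠ B.x ∧ v ≠ B.y}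

open Classical in
/-- The canonical map from the second graph into the parallel composition. -/
noncomputable def TTGraph.pmap (A B : TTGraph) (v : B.V) : A.pV B :=
  if h1 : v = B.x then Sum.inl A.x
  else if h2 : v = B.y then Sum.inl A.y
  else Sum.inr ⟨v, h1, h2⟩

/-- Parallel composition of two-terminal graphs: identify the two `x`'s and the two `y`'s. -/
noncomputable def TTGraph.parallel (A B : TTGraph) : TTGraph where
  V := A.pV B
  G := SimpleGraph.fromRel (fun u w =>
    (∃ a b, A.G.Adj a b ∧ u = Sum.inl a ∧ w = Sum.inl b) ∨
    (∃ a b, B.G.Adj a b ∧ u = A.pmap B a ∧ w = A.pmap B b))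
  x := Sum.inl A.x
  y := Sum.inl A.y

/-- Vertex type of the series composition. -/
def TTGraph.sV (A B : TTGraph) : Type := A.V ⊕ {v : B.V // v ≠ B.x}

open Classical in
/-- The canonical map from the second graph into the series composition. -/
noncomputable def TTGraph.smap (A B : TTGraph) (v : B.V) : A.sV B :=
  if h1 : v = B.x then Sum.inl A.y else Sum.inr ⟨v, h1⟩

/-- Series composition of two-terminal graphs: identify `y` of the first with `x` of the second. -/
noncomputable def TTGraph.series (A B : TTGraph) : TTGraph where
  V := A.sV B
  G := SimpleGraph.fromRel (fun u w =>
    (∃ a b, A.G.Adj a b ∧ u = Sum.inl a ∧ w = Sum.inl b) ∨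
    (∃ a b, B.G.Adj a b ∧ u = A.smap B a ∧ w = A.smap B b))
  x := Sum.inl A.x
  y := A.smap B B.y

/-- Isomorphism of two-terminal graphs (preserving terminals). -/
def TTGraph.Equiv (A B : TTGraph) : Prop :=
  ∃ e : A.G ≃g B.G, e A.x = B.x ∧ e A.y = B.y

/-- `K₂` with its two vertices as terminals. -/
def K2TT : TTGraph := ⟨Bool, ⊤, false, true⟩

/-- Two-terminal series-parallel graphs, built recursively from `K₂` by
series and parallel compositions (up to terminal-preserving isomorphism). -/
inductive IsSP : TTGraph → Prop
  | k2 (A : TTGraph) : A.Equiv K2TT → IsSP A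
  | parallel (A B C : TTGraph) : IsSP A → IsSP B → C.Equiv (A.parallel B) → IsSP C
  | series (A B C : TTGraph) : IsSP A → IsSP B → C.Equiv (A.series B) → IsSP C

/-- A graph is series-parallel if it is a two-terminal series-parallel graph
for some choice of terminals. -/
def SeriesParallel {V : Type} (G : SimpleGraph V) : Prop :=
  ∃ x y : V, IsSP ⟨V, G, x, y⟩

/-- `G` is `(a, m)`-choosable: every list assignment with lists of size `a`
admits an `m`-fold colouring from the lists with adjacent vertices getting
disjoint colour sets. -/
def Choosable {V : Type} (G : SimpleGraph V) (a m : ℕ) : Prop :=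
  ∀ L : V → Finset ℕ, (∀ v, (L v).card = a) →
    ∃ φ : V → Finset ℕ, (∀ v, φ v ⊆ L v) ∧ (∀ v, (φ v).card = m) ∧
      ∀ u w, G.Adj u w → Disjoint (φ u) (φ w)

/-- `G` is a path graph: it has a Hamiltonian path using all of its edges. -/
def IsPathGraph {V : Type} (G : SimpleGraph V) : Prop :=
  ∃ (u w : V) (p : G.Walk u w), p.IsPath ∧ (∀ v, v ∈ p.support) ∧
    ∀ e ∈ G.edgeSet, e ∈ p.edges

/-- `G` is a cycle graph: it has a Hamiltonian cycle using all of its edges. -/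
def IsCycleGraph {V : Type} (G : SimpleGraph V) : Prop :=
  ∃ (u : V) (p : G.Walk u u), p.IsCycle ∧ (∀ v, v ∈ p.support) ∧
    ∀ e ∈ G.edgeSet, e ∈ p.edges

namespace SPProof

/-- Pick an `m`-subset of `X` containing as much as possible of `P`. -/
lemma pick (X P : Finset ℕ) (m : ℕ) (hP : P ⊆ X) (hX : m ≤ X.card) :
    ∃ F ⊆ X, F.card = m ∧ min m P.card ≤ (F ∩ P).card := by
  by_cases h : P.card ≤ m
  · obtain ⟨F, h1, h2, h3⟩ := Finset.exists_subsuperset_card_eq hP h hX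
    refine ⟨F, h2, h3, ?_⟩
    rw [Finset.inter_eq_right.2 h1]
    exact min_le_right _ _
  · obtain ⟨F, h1, h2⟩ := Finset.exists_subset_card_eq (s := P) (n := m) (by omega)
    refine ⟨F, h1.trans hP, h2, ?_⟩
    rw [Finset.inter_eq_left.2 h1, h2]
    exact min_le_left _ _

/-- `φ 0 = S`, and `φ` is a valid colouring of the path `0, …, n`. -/
def Seq (L : ℕ → Finset ℕ) (m : ℕ) (S : Finset ℕ) (n : ℕ) (φ : ℕ → Finset ℕ) : Prop :=
  φ 0 = S ∧ (∀ i, 1 ≤ i → i ≤ n → φ i ⊆ L i) ∧ (∀ i ≤ n, (φ i).card = m) ∧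
    ∀ i < n, Disjoint (φ i) (φ (i + 1))

lemma Seq.ext {L m S n φ} (h : Seq L m S n φ) (F : Finset ℕ) (h1 : F ⊆ L (n + 1) \ φ n)
    (h2 : F.card = m) : Seq L m S (n + 1) (Function.update φ (n + 1) F) := by
  obtain ⟨a, b, c, d⟩ := h
  refine ⟨by simp [a], ?_, ?_, ?_⟩
  · intro i hi hi'
    by_cases hh : i = n + 1
    · subst hh
      simpa using h1.trans Finset.sdiff_subset
    · rw [Function.update_of_ne hh]
      exact b i hi (by omega)
  · intro i hi
    by_cases hh : i = n + 1
    · subst hh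
      simpa using h2
    · rw [Function.update_of_ne hh]
      exact c i (by omega)
  · intro i hi
    by_cases hh : i = n
    · subst hh
      rw [Function.update_of_ne (by omega)]
      simp only [Function.update_self]
      exact (Finset.disjoint_of_subset_left h1 Finset.sdiff_disjoint).symm
    · rw [Function.update_of_ne (by omega), Function.update_of_ne (by omega)]
      exact d i (by omega)

def Q (L : ℕ → Finset ℕ) (m : ℕ) (S : Finset ℕ) (n b c : ℕ) : Prop :=
  ∀ B : Finset ℕ, B.card ≤ b → ∃ φ, Seq L m S n φ ∧ (φ n ∩ B).card ≤ c

lemma stepA {L m S n c e} (hL : (L (n + 1)).card = 2 * m + e)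
    (h : Q L m S n (m + e) c) : Q L m S (n + 1) m (c - e) := by
  intro T hT
  obtain ⟨T', h1, h2, h3⟩ := Finset.exists_subsuperset_card_eq
    (Finset.inter_subset_right : T ∩ L (n+1) ⊆ L (n+1))
    ((Finset.card_le_card Finset.inter_subset_left).trans hT) (by omega)
  have hB : (L (n+1) \ T').card = m + e := by
    rw [Finset.card_sdiff_of_subset h2]; omega
  obtain ⟨φ, hφ, hc⟩ := h (L (n+1) \ T') hB.le
  have hcard := hφ.2.2.1 n le_rfl
  have hP : m + e - c ≤ ((L (n+1) \ T') \ φ n).card := by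
    have := Finset.card_sdiff_add_card_inter (L (n+1) \ T') (φ n)
    rw [Finset.inter_comm] at this
    omega
  obtain ⟨F, f1, f2, f3⟩ := pick (L (n+1) \ φ n) ((L (n+1) \ T') \ φ n) m
    (Finset.sdiff_subset_sdiff Finset.sdiff_subset le_rfl)
    (by have := Finset.le_card_sdiff (φ n) (L (n+1)); omega)
  refine ⟨_, hφ.ext F f1 f2, ?_⟩
  simp only [Function.update_self]
  have hd : (F ∩ T).card + (F ∩ ((L (n+1) \ T') \ φ n)).card ≤ F.card := by
    rw [← Finset.card_union_of_disjoint]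
    · exact Finset.card_le_card (Finset.union_subset Finset.inter_subset_left
        Finset.inter_subset_left)
    · rw [Finset.disjoint_left]
      intro z hz hz'
      simp only [Finset.mem_inter, Finset.mem_sdiff] at hz hz'
      exact hz'.2.1.2 (h1 (Finset.mem_inter.2 ⟨hz.2, hz'.2.1.1⟩))
  have : min m (m + e - c) ≤ min m ((L (n+1) \ T') \ φ n).card := min_le_min le_rfl hP
  omega

lemma stepB {L m S n c e} (hL : (L (n + 1)).card = 2 * m + e)
    (h : Q L m S n m c) : Q L m S (n + 1) (m + e) c := by
  intro B hB
  obtain ⟨T, h1, h2⟩ := Finset.exists_subset_card_eq (s := L (n+1) \ B) (n := m)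
    (by have := Finset.le_card_sdiff B (L (n+1)); omega)
  obtain ⟨φ, hφ, hc⟩ := h T h2.le
  have hcard := hφ.2.2.1 n le_rfl
  have hP : m - c ≤ (T \ φ n).card := by
    have := Finset.card_sdiff_add_card_inter T (φ n)
    rw [Finset.inter_comm] at this
    omega
  obtain ⟨F, f1, f2, f3⟩ := pick (L (n+1) \ φ n) (T \ φ n) m
    (Finset.sdiff_subset_sdiff (h1.trans Finset.sdiff_subset) le_rfl)
    (by have := Finset.le_card_sdiff (φ n) (L (n+1)); omega)
  refine ⟨_, hφ.ext F f1 f2, ?_⟩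
  simp only [Function.update_self]
  have hd : (F ∩ B).card + (F ∩ (T \ φ n)).card ≤ F.card := by
    rw [← Finset.card_union_of_disjoint]
    · exact Finset.card_le_card (Finset.union_subset Finset.inter_subset_left
        Finset.inter_subset_left)
    · rw [Finset.disjoint_left]
      intro z hz hz'
      simp only [Finset.mem_inter, Finset.mem_sdiff] at hz hz'
      exact (Finset.mem_sdiff.1 (h1 hz'.2.1)).2 hz.2
  have : min m (m - c) ≤ min m (T \ φ n).card := min_le_min le_rfl hP
  omega

lemma Q_triv {L m S e} (hL : ∀ n, (L n).card = 2 * m + e) (hS : S.card = m) (b n : ℕ) :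
    Q L m S n b m := by
  intro B hB
  suffices h : ∃ φ, Seq L m S n φ by
    obtain ⟨φ, hφ⟩ := h
    refine ⟨φ, hφ, ?_⟩
    rw [← hφ.2.2.1 n le_rfl]
    exact Finset.card_le_card Finset.inter_subset_left
  clear hB B
  induction n with
  | zero =>
    refine ⟨fun _ => S, rfl, ?_, ?_, ?_⟩
    · intro i h1 h2; omega
    · intro i _; exact hS
    · intro i h; omega
  | succ n ih =>
    obtain ⟨φ, hφ⟩ := ih
    have hcard := hφ.2.2.1 n le_rfl
    obtain ⟨F, f1, f2⟩ := Finset.exists_subset_card_eq (s := L (n+1) \ φ n) (n := m)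
      (by have := Finset.le_card_sdiff (φ n) (L (n+1)); have := hL (n+1); omega)
    exact ⟨_, hφ.ext F f1 f2⟩

lemma Q_iter {L m S e} (hL : ∀ n, (L n).card = 2 * m + e) (hS : S.card = m) (n r : ℕ) :
    Q L m S (n + 2 * r) (m + e) (m - r * e) := by
  induction r with
  | zero => simpa using Q_triv hL hS (m + e) n
  | succ r ih =>
    have := stepB (hL _) (stepA (hL _) ih)
    have h2 : m - (r + 1) * e = m - r * e - e := by
      rw [Nat.sub_sub]; congr 1; ring
    rw [h2]
    exact this

/-- The path lemma. -/
lemma path_seq {L : ℕ → Finset ℕ} {m e q n : ℕ} {S T : Finset ℕ}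
    (hL : ∀ n, (L n).card = 2 * m + e) (hS : S.card = m)
    (hT : T.card = m) (hq : 0 < q) (he : m ≤ q * e) (hn : 2 * q ≤ n) :
    ∃ φ : ℕ → Finset ℕ, φ 0 = S ∧ φ n = T ∧ (∀ i, 1 ≤ i → i < n → φ i ⊆ L i) ∧
      (∀ i ≤ n, (φ i).card = m) ∧ ∀ i < n, Disjoint (φ i) (φ (i + 1)) := by
  obtain ⟨r, rfl⟩ : ∃ r, q = r + 1 := ⟨q - 1, by omega⟩
  obtain ⟨k, rfl⟩ : ∃ k, n = k + 2 * r + 1 + 1 := ⟨n - 2 * r - 2, by omega⟩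
  have h := stepA (hL _) (Q_iter hL hS k r)
  obtain ⟨φ, ⟨a, b, c, d⟩, hφ2⟩ := h T hT.le
  have hz : m - r * e - e = 0 := by
    have : (r + 1) * e = r * e + e := by ring
    omega
  rw [hz, Nat.le_zero, Finset.card_eq_zero, ← Finset.disjoint_iff_inter_eq_empty] at hφ2
  refine ⟨Function.update φ (k + 2 * r + 1 + 1) T, by simp [a], by simp, ?_, ?_, ?_⟩
  · intro i hi hi'
    rw [Function.update_of_ne (by omega)]
    exact b i hi (by omega)
  · intro i hi
    by_cases hh : i = k + 2 * r + 1 + 1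
    · subst hh
      simpa using hT
    · rw [Function.update_of_ne hh]
      exact c i (by omega)
  · intro i hi
    by_cases hh : i = k + 2 * r + 1
    · subst hh
      rw [Function.update_of_ne (by omega)]
      simpa using hφ2
    · rw [Function.update_of_ne (by omega), Function.update_of_ne (by omega)]
      exact d i (by omega)

/-- `m`-fold `L`-colouring. -/
def Good {V : Type} (G : SimpleGraph V) (L : V → Finset ℕ) (m : ℕ) (φ : V → Finset ℕ) : Prop :=
  (∀ v, φ v ⊆ L v ∧ (φ v).card = m) ∧ ∀ u w, G.Adj u w → Disjoint (φ u) (φ w)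

/-- `m`-fold `L`-colouring of the walk `p`. -/
def GoodOn {V : Type} {G : SimpleGraph V} {x y : V} (p : G.Walk x y) (L : V → Finset ℕ) (m : ℕ)
    (φ : V → Finset ℕ) : Prop :=
  (∀ v ∈ p.support, φ v ⊆ L v ∧ (φ v).card = m) ∧
    ∀ u w, s(u, w) ∈ p.edges → Disjoint (φ u) (φ w)

/-- Every colouring of `p` extends to the whole graph. -/
def Ext {V : Type} {G : SimpleGraph V} (a m : ℕ) {x y : V} (p : G.Walk x y) : Prop :=
  ∀ L : V → Finset ℕ, (∀ v, (L v).card = a) → ∀ φ, GoodOn p L m φ →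
    ∃ ψ, Good G L m ψ ∧ ∀ v ∈ p.support, ψ v = φ v

def PP {V : Type} (a m : ℕ) (G : SimpleGraph V) (x y : V) : Prop :=
  ∃ p : G.Walk x y, p.IsPath ∧ Ext a m p

lemma path_walk {V : Type} {G : SimpleGraph V} {x y : V} (p : G.Walk x y) (hp : p.IsPath)
    {m e q : ℕ} (hq : 0 < q) (he : m ≤ q * e) (hn : 2 * q ≤ p.length)
    (L : V → Finset ℕ) (hL : ∀ v, (L v).card = 2 * m + e) {S T : Finset ℕ}
    (hS : S.card = m) (hT : T.card = m) (hSL : S ⊆ L x) (hTL : T ⊆ L y) :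
    ∃ φ, GoodOn p L m φ ∧ φ x = S ∧ φ y = T := by
  classical
  obtain ⟨φ', h0, h1, h2, h3, h4⟩ := path_seq (L := fun i => L (p.getVert i))
    (fun i => hL _) hS hT hq he hn
  let φ : V → Finset ℕ := fun v =>
    if h : ∃ i, i ≤ p.length ∧ p.getVert i = v then φ' h.choose else ∅
  have key : ∀ i ≤ p.length, φ (p.getVert i) = φ' i := by
    intro i hi
    have h : ∃ j, j ≤ p.length ∧ p.getVert j = p.getVert i := ⟨i, hi, rfl⟩
    have hc := h.choose_spec
    have : h.choose = i := hp.getVert_injOn hc.1 hi hc.2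
    simp only [φ]
    rw [dif_pos h, this]
  refine ⟨φ, ⟨?_, ?_⟩, ?_, ?_⟩
  · intro v hv
    obtain ⟨i, rfl, hi⟩ := SimpleGraph.Walk.mem_support_iff_exists_getVert.1 hv
    rw [key i hi]
    refine ⟨?_, h3 i hi⟩
    rcases Nat.eq_zero_or_pos i with rfl | hi0
    · rw [h0]; simpa using hSL
    · rcases hi.eq_or_lt with rfl | hlt
      · rw [h1]; simpa using hTL
      · exact h2 i hi0 hlt
  · intro u w huw
    obtain ⟨i, hi, hh⟩ := (SimpleGraph.Walk.mk_mem_edges_iff_exists p).1 huw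
    have hd := h4 i hi
    rw [← key i hi.le, ← key (i + 1) hi] at hd
    rcases Sym2.eq_iff.1 hh with ⟨rfl, rfl⟩ | ⟨rfl, rfl⟩
    · exact hd
    · exact hd.symm
  · have := key 0 (Nat.zero_le _)
    simpa [h0] using this
  · have := key p.length le_rfl
    simpa [h1] using this

structure Glue {α β γ : Type} (A : SimpleGraph α) (B : SimpleGraph β) (C : SimpleGraph γ)
    (f : A →g C) (g : B →g C) (R : α → β → Prop) : Prop where
  finj : Function.Injective f
  ginj : Function.Injective g
  cov : ∀ c, (∃ a, f a = c) ∨ ∃ b, g b = c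
  edge : ∀ u w, C.Adj u w → (∃ a b, A.Adj a b ∧ f a = u ∧ f b = w) ∨
    ∃ a b, B.Adj a b ∧ g a = u ∧ g b = w
  ov : ∀ a b, f a = g b → R a b

section
variable {α β γ : Type} {A : SimpleGraph α} {B : SimpleGraph β} {C : SimpleGraph γ}
  {f : A →g C} {g : B →g C} {R : α → β → Prop}

lemma Glue.symm (h : Glue A B C f g R) : Glue B A C g f (fun b a => R a b) :=
  ⟨h.ginj, h.finj, fun c => (h.cov c).symm, fun u w huw => (h.edge u w huw).symm,
    fun a b hab => h.ov b a hab.symm⟩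

lemma Glue.iso {δ : Type} {D : SimpleGraph δ} (h : Glue A B C f g R) (e : C ≃g D) :
    Glue A B D (e.toHom.comp f) (e.toHom.comp g) R where
  finj := by
    intro a b hab
    exact h.finj (e.injective hab)
  ginj := by
    intro a b hab
    exact h.ginj (e.injective hab)
  cov := by
    intro c
    rcases h.cov (e.symm c) with ⟨a, ha⟩ | ⟨a, ha⟩
    · left; exact ⟨a, by change e (f a) = c; rw [ha]; simp⟩
    · right; exact ⟨a, by change e (g a) = c; rw [ha]; simp⟩
  edge := by
    intro u w huw
    rcases h.edge (e.symm u) (e.symm w) (e.symm.map_adj_iff.2 huw) with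
      ⟨a, b, hab, ha, hb⟩ | ⟨a, b, hab, ha, hb⟩
    · left
      refine ⟨a, b, hab, ?_, ?_⟩
      · change e (f a) = u; rw [ha]; simp
      · change e (f b) = w; rw [hb]; simp
    · right
      refine ⟨a, b, hab, ?_, ?_⟩
      · change e (g a) = u; rw [ha]; simp
      · change e (g b) = w; rw [hb]; simp
  ov := by
    intro a b hab
    exact h.ov a b (e.injective hab)

lemma Glue.colour (h : Glue A B C f g R) {L : γ → Finset ℕ} {m : ℕ} {ψA ψB}
    (hA : Good A (fun a => L (f a)) m ψA) (hB : Good B (fun b => L (g b)) m ψB)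
    (hR : ∀ a b, R a b → ψA a = ψB b) :
    ∃ ψ, Good C L m ψ ∧ (∀ a, ψ (f a) = ψA a) ∧ ∀ b, ψ (g b) = ψB b := by
  classical
  let ψ : γ → Finset ℕ := fun c =>
    if h1 : ∃ a, f a = c then ψA h1.choose else if h2 : ∃ b, g b = c then ψB h2.choose else ∅
  have k1 : ∀ a, ψ (f a) = ψA a := by
    intro a
    have h1 : ∃ a', f a' = f a := ⟨a, rfl⟩
    simp only [ψ]
    rw [dif_pos h1, h.finj h1.choose_spec]
  have k2 : ∀ b, ψ (g b) = ψB b := by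
    intro b
    by_cases h1 : ∃ a, f a = g b
    · obtain ⟨a, ha⟩ := h1
      rw [← ha, k1]
      exact hR _ _ (h.ov _ _ ha)
    · have h2 : ∃ b', g b' = g b := ⟨b, rfl⟩
      simp only [ψ]
      rw [dif_neg h1, dif_pos h2, h.ginj h2.choose_spec]
  refine ⟨ψ, ⟨?_, ?_⟩, k1, k2⟩
  · intro v
    rcases h.cov v with ⟨a, rfl⟩ | ⟨b, rfl⟩
    · rw [k1]; exact hA.1 a
    · rw [k2]; exact hB.1 b
  · intro u w huw
    rcases h.edge u w huw with ⟨a, b, hab, rfl, rfl⟩ | ⟨a, b, hab, rfl, rfl⟩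
    · rw [k1, k1]; exact hA.2 a b hab
    · rw [k2, k2]; exact hB.2 a b hab

lemma GoodOn.comap {x y : α} {p : A.Walk x y} {L : γ → Finset ℕ} {m : ℕ} {φ : γ → Finset ℕ}
    (h : GoodOn (p.map f) L m φ) : GoodOn p (fun a => L (f a)) m (fun a => φ (f a)) := by
  refine ⟨fun v hv => h.1 (f v) ?_, fun u w huw => h.2 (f u) (f w) ?_⟩
  · rw [SimpleGraph.Walk.support_map]
    exact List.mem_map_of_mem hv
  · rw [SimpleGraph.Walk.edges_map]
    exact List.mem_map.2 ⟨_, huw, rfl⟩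

lemma parallel_aux (h : Glue A B C f g R) {a m : ℕ} {x y : α} {x' y' : β}
    (hR : ∀ a b, R a b → (a = x ∧ b = x') ∨ (a = y ∧ b = y'))
    (pA : A.Walk x y) (pB : B.Walk x' y') (hA : pA.IsPath) (eA : Ext a m pA) (eB : Ext a m pB)
    (hB : ∀ L : γ → Finset ℕ, (∀ v, (L v).card = a) → ∀ φ, GoodOn (pA.map f) L m φ →
      ∃ φB, GoodOn pB (fun b => L (g b)) m φB ∧ φB x' = φ (f x) ∧ φB y' = φ (f y)) :
    PP a m C (f x) (f y) := by
  refine ⟨pA.map f, (SimpleGraph.Walk.isPath_map_iff_of_injective h.finj).2 hA, ?_⟩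
  intro L hL φ hφ
  obtain ⟨ψA, gA, xA⟩ := eA (fun a => L (f a)) (fun v => hL _) _ hφ.comap
  obtain ⟨φB, hφB, hx, hy⟩ := hB L hL φ hφ
  obtain ⟨ψB, gB, xB⟩ := eB (fun a => L (g a)) (fun v => hL _) _ hφB
  obtain ⟨ψ, h1, h2, h3⟩ := h.colour gA gB (by
    intro a b hab
    rcases hR a b hab with ⟨rfl, rfl⟩ | ⟨rfl, rfl⟩
    · rw [xA _ (by simp), xB _ (by simp), hx]
    · rw [xA _ (by simp), xB _ (by simp), hy])
  refine ⟨ψ, h1, ?_⟩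
  intro v hv
  rw [SimpleGraph.Walk.support_map] at hv
  obtain ⟨w, hw, rfl⟩ := List.mem_map.1 hv
  rw [h2, xA w hw]

lemma parallel_long (h : Glue A B C f g R) {m e q : ℕ} (hq : 0 < q) (he : m ≤ q * e)
    {x y : α} {x' y' : β}
    (hR : ∀ a b, R a b → (a = x ∧ b = x') ∨ (a = y ∧ b = y'))
    (hx : f x = g x') (hy : f y = g y')
    (pA : A.Walk x y) (pB : B.Walk x' y') (hA : pA.IsPath) (hB : pB.IsPath)
    (eA : Ext (2 * m + e) m pA) (eB : Ext (2 * m + e) m pB)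
    (hl : 2 * q ≤ pB.length) :
    PP (2 * m + e) m C (f x) (f y) := by
  refine parallel_aux h hR pA pB hA eA eB ?_
  intro L hL φ hφ
  have h1 := hφ.1 (f x) (SimpleGraph.Walk.start_mem_support _)
  have h2 := hφ.1 (f y) (SimpleGraph.Walk.end_mem_support _)
  exact path_walk pB hB hq he hl (fun b => L (g b)) (fun b => hL _) h1.2 h2.2
    (by rw [← hx]; exact h1.1) (by rw [← hy]; exact h2.1)

lemma GoodOn.of_eq {x y x' y' : γ} {p : C.Walk x y} {p' : C.Walk x' y'} {L m φ}
    (h1 : p.support = p'.support) (h2 : p.edges = p'.edges) (h : GoodOn p L m φ) :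
    GoodOn p' L m φ := by
  unfold GoodOn at *
  rwa [← h1, ← h2]

lemma parallel_PP (h : Glue A B C f g R) {m e q : ℕ} (hq : 0 < q) (he : m ≤ q * e)
    {x y : α} {x' y' : β}
    (hR : ∀ a b, R a b → (a = x ∧ b = x') ∨ (a = y ∧ b = y'))
    (hx : f x = g x') (hy : f y = g y')
    (hA : PP (2 * m + e) m A x y) (hB : PP (2 * m + e) m B x' y')
    (hg : ∀ a (w : C.Walk a a), w.IsCycle → 4 * q - 1 ≤ w.length) :
    PP (2 * m + e) m C (f x) (f y) := by
  obtain ⟨pA, iA, eA⟩ := hA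
  obtain ⟨pB, iB, eB⟩ := hB
  by_cases hlB : 2 * q ≤ pB.length
  · exact parallel_long h hq he hR hx hy pA pB iA iB eA eB hlB
  by_cases hlA : 2 * q ≤ pA.length
  · rw [hx, hy]
    exact parallel_long h.symm hq he
      (fun a b hab => (hR b a hab).imp And.symm And.symm) hx.symm hy.symm pB pA iB iA eB eA hlA
  have heq : pA.map f = (pB.map g).copy hx.symm hy.symm := by
    by_contra hne
    have i1 : (pA.map f).IsPath := (SimpleGraph.Walk.isPath_map_iff_of_injective h.finj).2 iA
    have i2 : ((pB.map g).copy hx.symm hy.symm).IsPath := by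
      rw [SimpleGraph.Walk.isPath_copy]
      exact (SimpleGraph.Walk.isPath_map_iff_of_injective h.ginj).2 iB
    obtain ⟨w, -, -, c, hc, hlen⟩ := i1.exists_isCycle_length_le_add_of_ne i2 hne
    have := hg _ c hc
    simp at hlen
    omega
  refine parallel_aux h hR pA pB iA eA eB ?_
  intro L hL φ hφ
  refine ⟨fun b => φ (g b), GoodOn.comap (f := g) ?_, by simp [hx], by simp [hy]⟩
  rw [heq] at hφ
  exact hφ.of_eq (by simp) (by simp)

lemma series_PP (h : Glue A B C f g R) {a m : ℕ} {x y : α} {x' y' : β}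
    (hR : ∀ a b, R a b → a = y ∧ b = x') (hxy : f y = g x')
    (hA : PP a m A x y) (hB : PP a m B x' y') :
    PP a m C (f x) (g y') := by
  obtain ⟨pA, iA, eA⟩ := hA
  obtain ⟨pB, iB, eB⟩ := hB
  have i1 : (pA.map f).IsPath := (SimpleGraph.Walk.isPath_map_iff_of_injective h.finj).2 iA
  have i2 : (pB.map g).IsPath := (SimpleGraph.Walk.isPath_map_iff_of_injective h.ginj).2 iB
  have i3 : ((pB.map g).copy hxy.symm rfl).IsPath := by
    rwa [SimpleGraph.Walk.isPath_copy]
  have hs : ((pB.map g).copy hxy.symm rfl).support = pB.support.map g := by simp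
  have he : ((pB.map g).copy hxy.symm rfl).edges = pB.edges.map (Sym2.map g) := by simp
  generalize (pB.map g).copy hxy.symm rfl = p2 at i3 hs he
  refine ⟨(pA.map f).append p2, ?_, ?_⟩
  · rw [SimpleGraph.Walk.isPath_def, SimpleGraph.Walk.support_append, List.nodup_append']
    refine ⟨i1.support_nodup, i3.support_nodup.tail, ?_⟩
    intro z hz hz'
    have hz2 : z ∈ p2.support := List.mem_of_mem_tail hz'
    rw [hs] at hz2
    rw [SimpleGraph.Walk.support_map] at hz
    obtain ⟨u, hu, rfl⟩ := List.mem_map.1 hz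
    obtain ⟨w, hw, hw'⟩ := List.mem_map.1 hz2
    obtain ⟨rfl, rfl⟩ := hR _ _ (h.ov _ _ hw'.symm)
    have := i3.support_nodup
    rw [← SimpleGraph.Walk.cons_tail_support, List.nodup_cons] at this
    exact this.1 hz'
  · intro L hL φ hφ
    have gA : GoodOn (pA.map f) L m φ := by
      refine ⟨fun v hv => hφ.1 v ?_, fun u w huw => hφ.2 u w ?_⟩
      · rw [SimpleGraph.Walk.mem_support_append_iff]; exact Or.inl hv
      · rw [SimpleGraph.Walk.edges_append, List.mem_append]; exact Or.inl huw
    have gB : GoodOn (pB.map g) L m φ := by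
      refine ⟨fun v hv => hφ.1 v ?_, fun u w huw => hφ.2 u w ?_⟩
      · rw [SimpleGraph.Walk.mem_support_append_iff, hs]
        rw [SimpleGraph.Walk.support_map] at hv
        exact Or.inr hv
      · rw [SimpleGraph.Walk.edges_append, List.mem_append, he]
        rw [SimpleGraph.Walk.edges_map] at huw
        exact Or.inr huw
    obtain ⟨ψA, gA, xA⟩ := eA (fun a => L (f a)) (fun v => hL _) _ gA.comap
    obtain ⟨ψB, gB, xB⟩ := eB (fun a => L (g a)) (fun v => hL _) _ gB.comap
    obtain ⟨ψ, h1, h2, h3⟩ := h.colour gA gB (by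
      intro a b hab
      obtain ⟨rfl, rfl⟩ := hR a b hab
      rw [xA _ (by simp), xB _ (by simp), hxy])
    refine ⟨ψ, h1, ?_⟩
    intro v hv
    rw [SimpleGraph.Walk.mem_support_append_iff, hs, SimpleGraph.Walk.support_map] at hv
    rcases hv with hv | hv
    · obtain ⟨w, hw, rfl⟩ := List.mem_map.1 hv
      rw [h2, xA w hw]
    · obtain ⟨w, hw, rfl⟩ := List.mem_map.1 hv
      rw [h3, xB w hw]

lemma girth_comap (hf : Function.Injective f) {k : ℕ}
    (hg : ∀ a (w : C.Walk a a), w.IsCycle → k ≤ w.length) :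
    ∀ a (w : A.Walk a a), w.IsCycle → k ≤ w.length := by
  intro a w hw
  have := hg _ (w.map f) ((SimpleGraph.Walk.isCycle_map_iff_of_injective hf).2 hw)
  simpa using this
end

lemma pmap_x (A B : TTGraph) : A.pmap B B.x = (Sum.inl A.x : A.V ⊕ _) := dif_pos rfl

lemma pmap_y (A B : TTGraph) (hB : B.x ≠ B.y) : A.pmap B B.y = (Sum.inl A.y : A.V ⊕ _) :=
  (dif_neg hB.symm).trans (dif_pos rfl)

lemma pmap_o (A B : TTGraph) (v : B.V) (h1 : v ≠ B.x) (h2 : v ≠ B.y) :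
    A.pmap B v = (Sum.inr ⟨v, h1, h2⟩ : A.V ⊕ {v : B.V // v ≠ B.x ∧ v ≠ B.y}) :=
  (dif_neg h1).trans (dif_neg h2)

lemma smap_x (A B : TTGraph) : A.smap B B.x = (Sum.inl A.y : A.V ⊕ _) := dif_pos rfl

lemma smap_o (A B : TTGraph) (v : B.V) (h1 : v ≠ B.x) :
    A.smap B v = (Sum.inr ⟨v, h1⟩ : A.V ⊕ {v : B.V // v ≠ B.x}) := dif_neg h1

lemma pmap_ov (A B : TTGraph) (hB : B.x ≠ B.y) (a : A.V) (b : B.V)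
    (h : (Sum.inl a : A.V ⊕ _) = A.pmap B b) : (a = A.x ∧ b = B.x) ∨ (a = A.y ∧ b = B.y) := by
  by_cases h1 : b = B.x
  · subst h1
    exact Or.inl ⟨Sum.inl.inj (h.trans (pmap_x A B)), rfl⟩
  · by_cases h2 : b = B.y
    · subst h2
      exact Or.inr ⟨Sum.inl.inj (h.trans (pmap_y A B hB)), rfl⟩
    · exact absurd (h.trans (pmap_o A B b h1 h2)) (by simp)

lemma smap_ov (A B : TTGraph) (a : A.V) (b : B.V)
    (h : (Sum.inl a : A.V ⊕ _) = A.smap B b) : a = A.y ∧ b = B.x := by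
  by_cases h1 : b = B.x
  · subst h1
    exact ⟨Sum.inl.inj (h.trans (smap_x A B)), rfl⟩
  · exact absurd (h.trans (smap_o A B b h1)) (by simp)

lemma pmap_inj (A B : TTGraph) (hA : A.x ≠ A.y) (hB : B.x ≠ B.y) :
    Function.Injective (A.pmap B) := by
  intro u w h
  by_cases h1 : u = B.x
  · subst h1
    rcases pmap_ov A B hB _ _ ((pmap_x A B).symm.trans h) with h' | h'
    · exact h'.2.symm
    · exact absurd h'.1 hA
  by_cases h2 : u = B.y
  · subst h2
    rcases pmap_ov A B hB _ _ ((pmap_y A B hB).symm.trans h) with h' | h'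
    · exact absurd h'.1.symm hA
    · exact h'.2.symm
  by_cases h3 : w = B.x
  · subst h3
    exact absurd ((pmap_o A B u h1 h2).symm.trans (h.trans (pmap_x A B))) (by simp)
  by_cases h4 : w = B.y
  · subst h4
    exact absurd ((pmap_o A B u h1 h2).symm.trans (h.trans (pmap_y A B hB))) (by simp)
  exact congrArg Subtype.val
    (Sum.inr.inj ((pmap_o A B u h1 h2).symm.trans (h.trans (pmap_o A B w h3 h4))))

lemma smap_inj (A B : TTGraph) : Function.Injective (A.smap B) := by
  intro u w h
  by_cases h1 : u = B.x
  · subst h1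
    exact (smap_ov A B _ _ ((smap_x A B).symm.trans h)).2.symm
  by_cases h3 : w = B.x
  · subst h3
    exact absurd ((smap_o A B u h1).symm.trans (h.trans (smap_x A B))) (by simp)
  exact congrArg Subtype.val
    (Sum.inr.inj ((smap_o A B u h1).symm.trans (h.trans (smap_o A B w h3))))

lemma parallel_glue (A B : TTGraph) (hA : A.x ≠ A.y) (hB : B.x ≠ B.y) :
    ∃ (f : A.G →g (A.parallel B).G) (g : B.G →g (A.parallel B).G),
      Glue A.G B.G (A.parallel B).G f g
        (fun a b => (a = A.x ∧ b = B.x) ∨ (a = A.y ∧ b = B.y)) ∧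
      (∀ a, f a = Sum.inl a) ∧ ∀ b, g b = A.pmap B b := by
  have inlinj : Function.Injective (fun a : A.V => (Sum.inl a : A.pV B)) :=
    fun a b h => Sum.inl.inj h
  let f : A.G →g (A.parallel B).G := ⟨fun a => (Sum.inl a : A.pV B), by
    intro a b hab
    refine (SimpleGraph.fromRel_adj _ _ _).2 ⟨?_, Or.inl (Or.inl ⟨a, b, hab, rfl, rfl⟩)⟩
    exact fun h => hab.ne (inlinj h)⟩
  let g : B.G →g (A.parallel B).G := ⟨A.pmap B, by
    intro a b hab
    refine (SimpleGraph.fromRel_adj _ _ _).2 ⟨?_, Or.inl (Or.inr ⟨a, b, hab, rfl, rfl⟩)⟩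
    exact fun h => hab.ne (pmap_inj A B hA hB h)⟩
  refine ⟨f, g, ⟨inlinj, pmap_inj A B hA hB, ?_, ?_, ?_⟩, fun _ => rfl, fun _ => rfl⟩
  · rintro (a | ⟨b, hb1, hb2⟩)
    · exact Or.inl ⟨a, rfl⟩
    · right
      exact ⟨b, pmap_o A B b hb1 hb2⟩
  · intro u w huw
    obtain ⟨-, (⟨a, b, hab, h1, h2⟩ | ⟨a, b, hab, h1, h2⟩) | (⟨a, b, hab, h1, h2⟩ | ⟨a, b, hab, h1, h2⟩)⟩ :=
      (SimpleGraph.fromRel_adj _ _ _).1 huw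
    · exact Or.inl ⟨a, b, hab, h1.symm, h2.symm⟩
    · exact Or.inr ⟨a, b, hab, h1.symm, h2.symm⟩
    · exact Or.inl ⟨b, a, hab.symm, h2.symm, h1.symm⟩
    · exact Or.inr ⟨b, a, hab.symm, h2.symm, h1.symm⟩
  · intro a b hab
    exact pmap_ov A B hB a b hab

lemma series_glue (A B : TTGraph) :
    ∃ (f : A.G →g (A.series B).G) (g : B.G →g (A.series B).G),
      Glue A.G B.G (A.series B).G f g (fun a b => a = A.y ∧ b = B.x) ∧
      (∀ a, f a = Sum.inl a) ∧ ∀ b, g b = A.smap B b := by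
  have inlinj : Function.Injective (fun a : A.V => (Sum.inl a : A.sV B)) :=
    fun a b h => Sum.inl.inj h
  let f : A.G →g (A.series B).G := ⟨fun a => (Sum.inl a : A.sV B), by
    intro a b hab
    refine (SimpleGraph.fromRel_adj _ _ _).2 ⟨?_, Or.inl (Or.inl ⟨a, b, hab, rfl, rfl⟩)⟩
    exact fun h => hab.ne (inlinj h)⟩
  let g : B.G →g (A.series B).G := ⟨A.smap B, by
    intro a b hab
    refine (SimpleGraph.fromRel_adj _ _ _).2 ⟨?_, Or.inl (Or.inr ⟨a, b, hab, rfl, rfl⟩)⟩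
    exact fun h => hab.ne (smap_inj A B h)⟩
  refine ⟨f, g, ⟨inlinj, smap_inj A B, ?_, ?_, ?_⟩, fun _ => rfl, fun _ => rfl⟩
  · rintro (a | ⟨b, hb1⟩)
    · exact Or.inl ⟨a, rfl⟩
    · right
      exact ⟨b, smap_o A B b hb1⟩
  · intro u w huw
    obtain ⟨-, (⟨a, b, hab, h1, h2⟩ | ⟨a, b, hab, h1, h2⟩) | (⟨a, b, hab, h1, h2⟩ | ⟨a, b, hab, h1, h2⟩)⟩ :=
      (SimpleGraph.fromRel_adj _ _ _).1 huw
    · exact Or.inl ⟨a, b, hab, h1.symm, h2.symm⟩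
    · exact Or.inr ⟨a, b, hab, h1.symm, h2.symm⟩
    · exact Or.inl ⟨b, a, hab.symm, h2.symm, h1.symm⟩
    · exact Or.inr ⟨b, a, hab.symm, h2.symm, h1.symm⟩
  · intro a b hab
    exact smap_ov A B a b hab

lemma IsSP_ne {A : TTGraph} (h : IsSP A) : A.x ≠ A.y := by
  induction h with
  | k2 A e =>
    obtain ⟨e, h1, h2⟩ := e
    intro h
    rw [h, h2] at h1
    exact absurd h1 (by simp [K2TT])
  | parallel A B C _ _ e hA hB =>
    obtain ⟨e, h1, h2⟩ := e
    intro h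
    rw [h, h2] at h1
    exact hA (Sum.inl.inj h1).symm
  | series A B C _ _ e hA hB =>
    obtain ⟨e, h1, h2⟩ := e
    intro h
    rw [h, h2] at h1
    exact absurd ((smap_o A B B.y hB.symm).symm.trans h1) (by simp [TTGraph.series])

lemma main {m e q : ℕ} (hq : 0 < q) (he : m ≤ q * e) {A : TTGraph} (h : IsSP A) :
    (∀ a (w : A.G.Walk a a), w.IsCycle → 4 * q - 1 ≤ w.length) →
    PP (2 * m + e) m A.G A.x A.y := by
  induction h with
  | k2 A e' =>
    intro _
    obtain ⟨e', h1, h2⟩ := e'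
    have hadj : A.G.Adj A.x A.y := by
      rw [← e'.map_adj_iff, h1, h2]
      simp [K2TT]
    have hall : ∀ v, v = A.x ∨ v = A.y := by
      intro v
      have : e' v = false ∨ e' v = true := by
        generalize e' v = b
        cases b
        · exact Or.inl rfl
        · exact Or.inr rfl
      rcases this with h | h
      · left; exact e'.injective (h.trans h1.symm)
      · right; exact e'.injective (h.trans h2.symm)
    refine ⟨hadj.toWalk, by simp [hadj.ne], ?_⟩
    intro L hL φ hφ
    have hsup : ∀ v, v ∈ hadj.toWalk.support := by
      intro v
      simpa using hall v
    refine ⟨φ, ⟨fun v => hφ.1 v (hsup v), fun u w huw => hφ.2 u w ?_⟩, fun _ _ => rfl⟩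
    have := huw.ne
    rcases hall u with rfl | rfl <;> rcases hall w with rfl | rfl <;> simp_all
  | parallel A B C sA sB e' ihA ihB =>
    intro hg
    obtain ⟨f, g, hG, hf, hgg⟩ := parallel_glue A B (IsSP_ne sA) (IsSP_ne sB)
    obtain ⟨e', h1, h2⟩ := e'
    have hG' := hG.iso e'.symm
    have fx : (e'.symm.toHom.comp f) A.x = C.x := by
      change e'.symm (f A.x) = _
      rw [hf]; apply e'.injective; rw [h1]; exact e'.apply_symm_apply _
    have fy : (e'.symm.toHom.comp f) A.y = C.y := by
      change e'.symm (f A.y) = _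
      rw [hf]; apply e'.injective; rw [h2]; exact e'.apply_symm_apply _
    have gx : (e'.symm.toHom.comp f) A.x = (e'.symm.toHom.comp g) B.x := by
      change e'.symm (f A.x) = e'.symm (g B.x)
      rw [hf, hgg]
      simp [TTGraph.pmap]
    have gy : (e'.symm.toHom.comp f) A.y = (e'.symm.toHom.comp g) B.y := by
      change e'.symm (f A.y) = e'.symm (g B.y)
      rw [hf, hgg]
      simp [TTGraph.pmap, (IsSP_ne sB).symm]
    have := parallel_PP hG' hq he (fun a b h => h) gx gy
      (ihA (girth_comap hG'.finj hg)) (ihB (girth_comap hG'.ginj hg)) hg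
    rwa [fx, fy] at this
  | series A B C sA sB e' ihA ihB =>
    intro hg
    obtain ⟨f, g, hG, hf, hgg⟩ := series_glue A B
    obtain ⟨e', h1, h2⟩ := e'
    have hG' := hG.iso e'.symm
    have fx : (e'.symm.toHom.comp f) A.x = C.x := by
      change e'.symm (f A.x) = _
      rw [hf]; apply e'.injective; rw [h1]; exact e'.apply_symm_apply _
    have fy : (e'.symm.toHom.comp g) B.y = C.y := by
      change e'.symm (g B.y) = _
      rw [hgg]; apply e'.injective; rw [h2]; exact e'.apply_symm_apply _
    have gx : (e'.symm.toHom.comp f) A.y = (e'.symm.toHom.comp g) B.x := by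
      change e'.symm (f A.y) = e'.symm (g B.x)
      rw [hf, hgg]
      simp [TTGraph.smap]
    have := series_PP hG' (fun a b h => h) gx
      (ihA (girth_comap hG'.finj hg)) (ihB (girth_comap hG'.ginj hg))
    rwa [fx, fy] at this

/-- A path can be coloured starting from any colour set of its first vertex. -/
lemma path_start {V : Type} {G : SimpleGraph V} {x y : V} (p : G.Walk x y) (hp : p.IsPath)
    {m e : ℕ} (L : V → Finset ℕ) (hL : ∀ v, (L v).card = 2 * m + e) (F : Finset ℕ)
    (hF : F ⊆ L x) (hc : F.card = m) : ∃ φ, GoodOn p L m φ ∧ φ x = F := by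
  classical
  induction p generalizing F with
  | nil =>
    refine ⟨fun _ => F, ⟨?_, ?_⟩, rfl⟩
    · intro v hv
      simp only [SimpleGraph.Walk.support_nil, List.mem_singleton] at hv
      subst hv
      exact ⟨hF, hc⟩
    · intro u w h; simp at h
  | @cons u v w h p ih =>
    rw [SimpleGraph.Walk.cons_isPath_iff] at hp
    obtain ⟨F', f1, f2⟩ := Finset.exists_subset_card_eq (s := L v \ F) (n := m)
      (by have := Finset.le_card_sdiff F (L v); have := hL v; omega)
    obtain ⟨φ, hφ, hv⟩ := ih hp.1 F' (f1.trans Finset.sdiff_subset) f2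
    have hne : ∀ z ∈ p.support, z ≠ u := fun z hz hzu => hp.2 (hzu ▸ hz)
    have hd : Disjoint F F' := (Finset.disjoint_of_subset_left f1 Finset.sdiff_disjoint).symm
    have hvu : v ≠ u := h.ne.symm
    refine ⟨Function.update φ u F, ⟨?_, ?_⟩, by simp⟩
    · intro z hz
      rw [SimpleGraph.Walk.support_cons, List.mem_cons] at hz
      by_cases hzu : z = u
      · subst hzu; simpa using ⟨hF, hc⟩
      · rw [Function.update_of_ne hzu]
        exact hφ.1 z (hz.resolve_left hzu)
    · intro a b hab
      rw [SimpleGraph.Walk.edges_cons, List.mem_cons] at hab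
      rcases hab with hab | hab
      · rcases Sym2.eq_iff.1 hab with ⟨rfl, rfl⟩ | ⟨rfl, rfl⟩
        · rw [Function.update_self, Function.update_of_ne hvu, hv]; exact hd
        · rw [Function.update_self, Function.update_of_ne hvu, hv]; exact hd.symm
      · rw [Function.update_of_ne (hne a (p.fst_mem_support_of_mem_edges hab)),
          Function.update_of_ne (hne b (p.snd_mem_support_of_mem_edges hab))]
        exact hφ.2 a b hab

end SPProof

/-- Theorem 2: for `k ∈ {4q-1, 4q, 4q+1, 4q+2}`, every series-parallel graph of
girth at least `k` is `(⌈(2 + 1/q)m⌉, m)`-choosable. -/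
theorem stmt_4 (q m k : ℕ) (hq : 0 < q) (hm : 0 < m)
    (hk : k ∈ ({4 * q - 1, 4 * q, 4 * q + 1, 4 * q + 2} : Set ℕ))
    (V : Type) (G : SimpleGraph V) (hSP : SeriesParallel G)
    (hgirth : (k : ℕ∞) ≤ G.egirth) :
    Choosable G ⌈((2 : ℝ) + 1 / q) * m⌉₊ m := by
  have hk' : 4 * q - 1 ≤ k := by
    simp only [Set.mem_insert_iff, Set.mem_singleton_iff] at hk
    omega
  have hg : ∀ a (w : G.Walk a a), w.IsCycle → 4 * q - 1 ≤ w.length := by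
    intro a w hw
    have := SimpleGraph.le_egirth.1 hgirth a w hw
    have : k ≤ w.length := by exact_mod_cast this
    omega
  have hceil : 2 * q * m + m ≤ q * ⌈((2 : ℝ) + 1 / q) * m⌉₊ := by
    have h := Nat.le_ceil (((2 : ℝ) + 1 / q) * m)
    have hq' : (0 : ℝ) < q := by exact_mod_cast hq
    have h2 := mul_le_mul_of_nonneg_left h hq'.le
    have h3 : (q : ℝ) * (((2 : ℝ) + 1 / q) * m) = 2 * q * m + m := by
      field_simp
    rw [h3] at h2
    exact_mod_cast h2
  generalize ⌈((2 : ℝ) + 1 / q) * m⌉₊ = a at hceil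
  have h2m : 2 * m ≤ a := by
    by_contra hlt
    have : q * a ≤ q * (2 * m) := Nat.mul_le_mul_left q (by omega)
    have : q * (2 * m) = 2 * q * m := by ring
    omega
  obtain ⟨e, rfl⟩ := Nat.exists_eq_add_of_le h2m
  have he : m ≤ q * e := by
    have : q * (2 * m + e) = 2 * q * m + q * e := by ring
    omega
  obtain ⟨x, y, hxy⟩ := hSP
  obtain ⟨p, hp, hE⟩ := SPProof.main hq he hxy hg
  intro L hL
  obtain ⟨F, hF, hFc⟩ := Finset.exists_subset_card_eq (s := L x) (n := m)
    (by rw [hL]; omega)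
  obtain ⟨φ, hφ, -⟩ := SPProof.path_start p hp L hL F hF hFc
  obtain ⟨ψ, hψ, -⟩ := hE L hL φ hφ
  exact ⟨ψ, fun v => (hψ.1 v).1, fun v => (hψ.1 v).2, hψ.2⟩
end

section
/- Let m, q be positive integers and ε > 0 a real number with εm an integer and ε < 1/q. For each k ∈ {4q-1, 4q, 4q+1, 4q+2}, there exists a series-parallel graph G of girth at least k that is not ((2+ε)m, m)-choosable; i.e., there is a list assignment L with |L(v)| = (2+ε)m for all vertices v admitting no m-fold L-colouring. In particular, G can be taken to be the parallel composition of p = C((2+ε)m, m)² paths each of length ⌈k/2⌉ joining two terminals x and y. -/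
open SimpleGraph

/-- Counting step along an edge. -/
lemma count_step {U W P Q : Finset ℕ} {m d e : ℕ} (hUW : Disjoint U W)
    (hW : W ⊆ P ∪ Q) (hWc : W.card = m) (hP : P.card = m + e)
    (h : m ≤ (U ∩ P).card + d) : m ≤ (W ∩ Q).card + (d + e) := by
  have h1 : (U ∩ P).card + (W ∩ P).card ≤ P.card := by
    rw [← Finset.card_union_of_disjoint]
    · apply Finset.card_le_card
      intro z hz
      simp only [Finset.mem_union, Finset.mem_inter] at hz
      tauto
    · exact hUW.mono Finset.inter_subset_left Finset.inter_subset_left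
  have h2 : W.card ≤ (W ∩ P).card + (W ∩ Q).card := by
    refine le_trans (Finset.card_le_card ?_) (Finset.card_union_le _ _)
    intro z hz
    have := hW hz
    simp only [Finset.mem_union, Finset.mem_inter] at this ⊢
    tauto
  omega

/-- The lists along a path. -/
def pathList (q : ℕ) (X A S T : Finset ℕ) (j : ℕ) : Finset ℕ :=
  if j = 0 then X else if j < 2 * q then S ∪ A else if j = 2 * q then A ∪ T else X

lemma path_count {q m em : ℕ} (hq : 0 < q) (h : q * em < m) {X A S T : Finset ℕ}
    (hA : A.card = m + em) (hS : S.card = m) (ψ : ℕ → Finset ℕ)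
    (hψ : ∀ j ≤ 2 * q + 1, ψ j ⊆ pathList q X A S T j)
    (hc : ∀ j ≤ 2 * q + 1, (ψ j).card = m)
    (hd : ∀ j < 2 * q + 1, Disjoint (ψ j) (ψ (j + 1))) :
    ¬ (ψ 0 = S ∧ ψ (2 * q + 1) = T) := by
  rintro ⟨h0, h1⟩
  have even_odd : ∀ i, i < q → m ≤ (ψ (2 * i) ∩ S).card + i * em →
      m ≤ (ψ (2 * i + 1) ∩ A).card + i * em := by
    intro i hi hm
    refine count_step (e := 0) (hd (2 * i) (by omega)) ?_ (hc _ (by omega)) hS hm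
    have := hψ (2 * i + 1) (by omega)
    rwa [pathList, if_neg (by omega), if_pos (by omega)] at this
  have main : ∀ i, i < q → m ≤ (ψ (2 * i) ∩ S).card + i * em := by
    intro i
    induction i with
    | zero => intro _; simp [h0, hS]
    | succ i ih =>
      intro hi
      have h2 := even_odd i (by omega) (ih (by omega))
      have := count_step (Q := S) (hd (2 * i + 1) (by omega)) (by
        have := hψ (2 * i + 1 + 1) (by omega)
        rw [pathList, if_neg (by omega), if_pos (by omega)] at this
        rwa [Finset.union_comm]) (hc _ (by omega)) hA h2
      rw [Nat.succ_mul i em]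
      exact this
  obtain ⟨r, rfl⟩ : ∃ r, q = r + 1 := ⟨q - 1, by omega⟩
  have h2 := even_odd r (by omega) (main r (by omega))
  have h3 := count_step (Q := T) (hd (2 * r + 1) (by omega)) (by
        have := hψ (2 * r + 1 + 1) (by omega)
        rwa [pathList, if_neg (by omega), if_neg (by omega), if_pos (by omega)] at this)
        (hc _ (by omega)) hA h2
  have h4 := hd (2 * (r + 1)) (by omega)
  rw [h1] at h4
  have h5 : ψ (2 * r + 1 + 1) ∩ T = ∅ := Finset.disjoint_iff_inter_eq_empty.1 h4
  rw [h5, Finset.card_empty] at h3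
  rw [Nat.succ_mul r em] at h
  omega

/-- Level function of a theta-like graph. -/
structure Lev (A : TTGraph) (l : ℕ) (f : A.V → ℕ) : Prop where
  fx : f A.x = 0
  fy : f A.y = l
  int : ∀ v, v ≠ A.x → v ≠ A.y → 0 < f v ∧ f v < l
  adj : ∀ u v, A.G.Adj u v → f u = f v + 1 ∨ f v = f u + 1
  uniq : ∀ v a b, v ≠ A.x → v ≠ A.y → A.G.Adj v a → A.G.Adj v b → f a = f b → a = b

lemma lev_walk {A : TTGraph} {l : ℕ} {f : A.V → ℕ} (h : Lev A l f) {u v : A.V}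
    (w : A.G.Walk u v) : f v ≤ f u + w.length ∧ f u ≤ f v + w.length := by
  induction w with
  | nil => simp
  | cons hadj p ih =>
    have := h.adj _ _ hadj
    simp only [SimpleGraph.Walk.length_cons]
    omega

lemma Lev.le {A : TTGraph} {l : ℕ} {f : A.V → ℕ} (h : Lev A l f) (v : A.V) : f v ≤ l := by
  by_cases h1 : v = A.x
  · rw [h1, h.fx]; omega
  by_cases h2 : v = A.y
  · rw [h2, h.fy]
  exact (h.int v h1 h2).2.le

lemma lev_girth {A : TTGraph} {l : ℕ} {f : A.V → ℕ} (h : Lev A l f) :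
    ((2 * l : ℕ) : ℕ∞) ≤ A.G.egirth := by
  classical
  rw [SimpleGraph.le_egirth]
  intro a c hc
  -- an extremal vertex of the cycle
  have key : ∀ v ∈ c.support, ∃ s t, s ∈ c.support ∧ t ∈ c.support ∧ s ≠ t ∧
      A.G.Adj v s ∧ A.G.Adj v t := by
    intro v hv
    have hr := hc.rotate hv
    refine ⟨(c.rotate v hv).snd, (c.rotate v hv).penultimate, ?_, ?_, hr.snd_ne_penultimate,
      SimpleGraph.Walk.adj_snd hr.not_nil, (SimpleGraph.Walk.adj_penultimate hr.not_nil).symm⟩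
    · rw [← SimpleGraph.Walk.mem_support_rotate_iff c v hv]
      exact SimpleGraph.Walk.getVert_mem_support _ _
    · rw [← SimpleGraph.Walk.mem_support_rotate_iff c v hv]
      exact SimpleGraph.Walk.getVert_mem_support _ _
  have hne : c.support.toFinset.Nonempty := ⟨a, by simp⟩
  have hx : A.x ∈ c.support := by
    obtain ⟨v, hv, hmin⟩ := Finset.exists_min_image _ f hne
    simp only [List.mem_toFinset] at hv hmin
    obtain ⟨s, t, hs, ht, hst, has, hat⟩ := key v hv
    have h1 := h.adj _ _ has
    have h2 := h.adj _ _ hat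
    have h3 := hmin s hs
    have h4 := hmin t ht
    by_cases hvx : v = A.x
    · rwa [← hvx]
    by_cases hvy : v = A.y
    · have := h.le s
      have := h.fy
      rw [← hvy] at this
      omega
    exact absurd (h.uniq v s t hvx hvy has hat (by omega)) hst
  have hy : A.y ∈ c.support := by
    obtain ⟨v, hv, hmax⟩ := Finset.exists_max_image _ f hne
    simp only [List.mem_toFinset] at hv hmax
    obtain ⟨s, t, hs, ht, hst, has, hat⟩ := key v hv
    have h1 := h.adj _ _ has
    have h2 := h.adj _ _ hat
    have h3 := hmax s hs
    have h4 := hmax t ht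
    by_cases hvy : v = A.y
    · rwa [← hvy]
    by_cases hvx : v = A.x
    · have := h.fx
      rw [← hvx] at this
      omega
    exact absurd (h.uniq v s t hvx hvy has hat (by omega)) hst
  have hy' : A.y ∈ (c.rotate _ hx).support := by
    rwa [SimpleGraph.Walk.mem_support_rotate_iff c _ hx]
  have e1 : (c.rotate _ hx).length = c.length := SimpleGraph.Walk.length_rotate _ _ _
  have e2 := congrArg SimpleGraph.Walk.length (SimpleGraph.Walk.take_spec (c.rotate _ hx) hy')
  rw [SimpleGraph.Walk.length_append, e1] at e2
  have e3 := lev_walk h ((c.rotate _ hx).takeUntil _ hy')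
  have e4 := lev_walk h ((c.rotate _ hx).dropUntil _ hy')
  rw [h.fx, h.fy] at e3 e4
  have : 2 * l ≤ c.length := by omega
  exact_mod_cast this

/-- A list assignment forbidding a set of colour pairs at the terminals. -/
def Avoids (A : TTGraph) (a m : ℕ) (X : Finset ℕ) (Q : Set (Finset ℕ × Finset ℕ)) : Prop :=
  ∃ L : A.V → Finset ℕ, L A.x = X ∧ L A.y = X ∧ (∀ v, (L v).card = a) ∧
    ∀ φ : A.V → Finset ℕ, (∀ v, φ v ⊆ L v) → (∀ v, (φ v).card = m) →
      (∀ u w, A.G.Adj u w → Disjoint (φ u) (φ w)) → (φ A.x, φ A.y) ∉ Q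

lemma parallel_adj {A B : TTGraph} {u w : A.pV B} (h : (A.parallel B).G.Adj u w) :
    (∃ a b, A.G.Adj a b ∧ u = Sum.inl a ∧ w = Sum.inl b) ∨
    (∃ a b, B.G.Adj a b ∧ u = A.pmap B a ∧ w = A.pmap B b) := by
  obtain ⟨_, (h | h) | (⟨a, b, h, h1, h2⟩ | ⟨a, b, h, h1, h2⟩)⟩ := (SimpleGraph.fromRel_adj _ _ _).1 h
  · exact Or.inl h
  · exact Or.inr h
  · exact Or.inl ⟨b, a, h.symm, h2, h1⟩
  · exact Or.inr ⟨b, a, h.symm, h2, h1⟩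

lemma pmap_x (A B : TTGraph) : A.pmap B B.x = Sum.inl A.x := dif_pos rfl

lemma pmap_y (A B : TTGraph) (h : B.y ≠ B.x) : A.pmap B B.y = Sum.inl A.y :=
  (dif_neg h).trans (dif_pos rfl)

lemma pmap_inr {A B : TTGraph} (b : {v : B.V // v ≠ B.x ∧ v ≠ B.y}) :
    A.pmap B b.1 = Sum.inr b :=
  (dif_neg b.2.1).trans (dif_neg b.2.2)

lemma pmap_cases (A B : TTGraph) (b : B.V) :
    (b = B.x ∧ A.pmap B b = Sum.inl A.x) ∨ (b = B.y ∧ A.pmap B b = Sum.inl A.y) ∨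
      ∃ c : {v : B.V // v ≠ B.x ∧ v ≠ B.y}, b = c.1 ∧ A.pmap B b = Sum.inr c := by
  by_cases h1 : b = B.x
  · left
    exact ⟨h1, by rw [h1]; exact pmap_x A B⟩
  by_cases h2 : b = B.y
  · right; left
    refine ⟨h2, ?_⟩
    rw [h2] at h1 ⊢
    exact pmap_y A B h1
  · right; right
    exact ⟨⟨b, h1, h2⟩, rfl, pmap_inr ⟨b, h1, h2⟩⟩

lemma parallel_ind {A B : TTGraph} {α : Type} (fA : A.V → α) (fB : B.V → α)
    (hx : fA A.x = fB B.x) (hy : fA A.y = fB B.y) :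
    ∃ f : A.pV B → α, (∀ a, f (Sum.inl a) = fA a) ∧ (∀ b, f (A.pmap B b) = fB b) ∧
      ∀ b, f (Sum.inr b) = fB b.1 := by
  refine ⟨fun v => Sum.elim fA (fun b => fB b.1) v, fun a => rfl, fun b => ?_, fun b => rfl⟩
  rcases pmap_cases A B b with ⟨h, e⟩ | ⟨h, e⟩ | ⟨c, h, e⟩
  · rw [e, h]; exact hx
  · rw [e, h]; exact hy
  · rw [e, h]; rfl

lemma pmap_eq_inl {A B : TTGraph} {b : B.V} {a : A.V} (h : A.pmap B b = Sum.inl a) :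
    a = A.x ∨ a = A.y := by
  rcases pmap_cases A B b with ⟨_, e⟩ | ⟨_, e⟩ | ⟨c, _, e⟩
  · left; exact Sum.inl.inj (h.symm.trans e)
  · right; exact Sum.inl.inj (h.symm.trans e)
  · cases h.symm.trans e

lemma pmap_eq_inr {A B : TTGraph} {c : B.V} {b : {v : B.V // v ≠ B.x ∧ v ≠ B.y}}
    (h : A.pmap B c = Sum.inr b) : c = b.1 := by
  rcases pmap_cases A B c with ⟨_, e⟩ | ⟨_, e⟩ | ⟨d, hd, e⟩
  · cases h.symm.trans e
  · cases h.symm.trans e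
  · rw [hd]
    exact congrArg Subtype.val (Sum.inr.inj (e.symm.trans h))

lemma parallel_lev {A B : TTGraph} {l : ℕ} {fA : A.V → ℕ} {fB : B.V → ℕ}
    (hA : Lev A l fA) (hB : Lev B l fB) : ∃ f, Lev (A.parallel B) l f := by
  obtain ⟨f, f1, f2, f3⟩ := parallel_ind fA fB (hA.fx.trans hB.fx.symm) (hA.fy.trans hB.fy.symm)
  refine ⟨f, ⟨(f1 _).trans hA.fx, (f1 _).trans hA.fy, ?_, ?_, ?_⟩⟩
  · rintro (a | b) h1 h2
    · rw [f1]
      exact hA.int a (fun h => h1 (congrArg Sum.inl h)) (fun h => h2 (congrArg Sum.inl h))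
    · rw [f3]
      exact hB.int b.1 b.2.1 b.2.2
  · intro u v huv
    obtain ⟨a, b, h, rfl, rfl⟩ | ⟨a, b, h, rfl, rfl⟩ := parallel_adj huv
    · rw [f1, f1]; exact hA.adj _ _ h
    · rw [f2, f2]; exact hB.adj _ _ h
  · rintro (a | b) s t h1 h2 hs ht hst
    · have h1' : a ≠ A.x := fun h => h1 (congrArg Sum.inl h)
      have h2' : a ≠ A.y := fun h => h2 (congrArg Sum.inl h)
      have key : ∀ s, (A.parallel B).G.Adj (Sum.inl a) s → ∃ c, A.G.Adj a c ∧ s = Sum.inl c := by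
        intro s hs
        obtain ⟨c, d, h, e1, e2⟩ | ⟨c, d, h, e1, e2⟩ := parallel_adj hs
        · cases Sum.inl.inj e1
          exact ⟨d, h, e2⟩
        · rcases pmap_eq_inl e1.symm with h | h <;> contradiction
      obtain ⟨c, hc, rfl⟩ := key s hs
      obtain ⟨d, hd, rfl⟩ := key t ht
      rw [f1, f1] at hst
      rw [hA.uniq a c d h1' h2' hc hd hst]
    · have key : ∀ s, (A.parallel B).G.Adj (Sum.inr b) s →
          ∃ c, B.G.Adj b.1 c ∧ s = A.pmap B c := by
        intro s hs
        obtain ⟨c, d, h, e1, e2⟩ | ⟨c, d, h, e1, e2⟩ := parallel_adj hs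
        · cases e1
        · rw [pmap_eq_inr e1.symm] at h
          exact ⟨d, h, e2⟩
      obtain ⟨c, hc, rfl⟩ := key s hs
      obtain ⟨d, hd, rfl⟩ := key t ht
      rw [f2, f2] at hst
      rw [hB.uniq b.1 c d b.2.1 b.2.2 hc hd hst]

lemma parallel_avoids {A B : TTGraph} {l : ℕ} {fA : A.V → ℕ} {fB : B.V → ℕ} (hl : 0 < l)
    (hA : Lev A l fA) (hB : Lev B l fB) {a m : ℕ} {X : Finset ℕ}
    {Q R : Set (Finset ℕ × Finset ℕ)} (h1 : Avoids A a m X Q) (h2 : Avoids B a m X R) :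
    Avoids (A.parallel B) a m X (Q ∪ R) := by
  obtain ⟨f, f1, f2, f3⟩ := parallel_ind fA fB (hA.fx.trans hB.fx.symm) (hA.fy.trans hB.fy.symm)
  obtain ⟨L, Lx, Ly, Lc, hL⟩ := h1
  obtain ⟨M, Mx, My, Mc, hM⟩ := h2
  obtain ⟨N, n1, n2, n3⟩ := parallel_ind L M (Lx.trans Mx.symm) (Ly.trans My.symm)
  refine ⟨N, (n1 _).trans Lx, (n1 _).trans Ly, ?_, ?_⟩
  · rintro (v | v)
    · rw [n1]; exact Lc v
    · rw [n3]; exact Mc v.1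
  · intro φ p1 p2 p3 hQ
    have hyx : B.y ≠ B.x := by
      intro h
      have := hB.fx
      rw [← h, hB.fy] at this
      omega
    rcases hQ with hQ | hQ
    · refine hL (fun v => φ (Sum.inl v)) (fun v => ?_) (fun v => p2 _) (fun u w huw => ?_) hQ
      · rw [← n1]; exact p1 _
      · refine p3 _ _ ((SimpleGraph.fromRel_adj _ _ _).2 ⟨?_, Or.inl (Or.inl ⟨u, w, huw, rfl, rfl⟩)⟩)
        exact fun h => huw.ne (Sum.inl.inj h)
    · refine hM (fun v => φ (A.pmap B v)) (fun v => ?_) (fun v => p2 _) (fun u w huw => ?_) ?_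
      · rw [← n2]; exact p1 _
      · refine p3 _ _ ((SimpleGraph.fromRel_adj _ _ _).2 ⟨?_, Or.inl (Or.inr ⟨u, w, huw, rfl, rfl⟩)⟩)
        intro h
        have h' := congrArg f h
        rw [f2, f2] at h'
        have := hB.adj _ _ huw
        omega
      · have ex : A.pmap B B.x = Sum.inl A.x := pmap_x A B
        have ey : A.pmap B B.y = Sum.inl A.y := pmap_y A B hyx
        simp only [ex, ey]
        exact hQ

/-- The path with `n + 1` edges. -/
noncomputable def pathTT : ℕ → TTGraph
  | 0 => K2TT
  | n + 1 => (pathTT n).series K2TT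

lemma equiv_refl (A : TTGraph) : A.Equiv A := ⟨SimpleGraph.Iso.refl, rfl, rfl⟩

lemma pathTT_isSP (n : ℕ) : IsSP (pathTT n) := by
  induction n with
  | zero => exact IsSP.k2 _ (equiv_refl _)
  | succ n ih => exact IsSP.series _ _ _ ih (IsSP.k2 _ (equiv_refl _)) (equiv_refl _)

/-- A path-like structure. -/
structure PathInv (A : TTGraph) (n : ℕ) (f : A.V → ℕ) (s : ℕ → A.V) : Prop where
  sx : s 0 = A.x
  sy : s n = A.y
  fs : ∀ j ≤ n, f (s j) = j
  le : ∀ v, f v ≤ n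
  sf : ∀ v, s (f v) = v
  adj : ∀ u v, A.G.Adj u v → f u = f v + 1 ∨ f v = f u + 1
  adj' : ∀ j < n, A.G.Adj (s j) (s (j + 1))

lemma pathInv_series {A : TTGraph} {n : ℕ} {f : A.V → ℕ} {s : ℕ → A.V} (h : PathInv A n f s) :
    ∃ f s, PathInv (A.series K2TT) (n + 1) f s := by
  have m0 : A.smap K2TT false = Sum.inl A.y := dif_pos rfl
  have hne : (true : K2TT.V) ≠ K2TT.x := by simp [K2TT]
  have m1 : A.smap K2TT true = Sum.inr ⟨true, hne⟩ := dif_neg hne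
  have hinr : ∀ b : {v : K2TT.V // v ≠ K2TT.x}, b = ⟨true, hne⟩ := by
    rintro ⟨b, hb⟩
    cases b
    · exact absurd rfl hb
    · rfl
  have fy : f A.y = n := by rw [← h.sy]; exact h.fs n le_rfl
  let F : (A.series K2TT).V → ℕ := fun v => Sum.elim f (fun _ => n + 1) v
  let s' : ℕ → (A.series K2TT).V := fun j => if j ≤ n then Sum.inl (s j) else Sum.inr ⟨true, hne⟩
  have sle : ∀ j, j ≤ n → s' j = Sum.inl (s j) := fun j hj => if_pos hj
  have slast : s' (n + 1) = Sum.inr ⟨true, hne⟩ := if_neg (by omega)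
  have half : ∀ u v, ((∃ a b, A.G.Adj a b ∧ u = Sum.inl a ∧ v = Sum.inl b) ∨
    (∃ a b, K2TT.G.Adj a b ∧ u = A.smap K2TT a ∧ v = A.smap K2TT b)) →
      F u = F v + 1 ∨ F v = F u + 1 := by
    rintro u v (⟨a, b, hab, rfl, rfl⟩ | ⟨a, b, hab, rfl, rfl⟩)
    · exact h.adj _ _ hab
    · have hab' : a ≠ b := hab.ne
      cases a <;> cases b
      · exact absurd rfl hab'
      · right; rw [m0, m1]; change n + 1 = f A.y + 1; rw [fy]
      · left; rw [m0, m1]; change n + 1 = f A.y + 1; rw [fy]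
      · exact absurd rfl hab'
  refine ⟨F, s', ?_, ?_, ?_, ?_, ?_, ?_, ?_⟩
  · exact (sle 0 (Nat.zero_le n)).trans (congrArg Sum.inl h.sx)
  · exact slast.trans m1.symm
  · intro j hj
    by_cases hjn : j ≤ n
    · rw [sle j hjn]; exact h.fs j hjn
    · obtain rfl : j = n + 1 := by omega
      rw [slast]; rfl
  · rintro (v | v)
    · exact (h.le v).trans (Nat.le_succ n)
    · exact le_rfl
  · rintro (v | v)
    · exact (sle (f v) (h.le v)).trans (congrArg Sum.inl (h.sf v))
    · exact slast.trans (congrArg Sum.inr (hinr v).symm)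
  · intro u v huv
    obtain ⟨_, h1 | h1⟩ := (SimpleGraph.fromRel_adj _ _ _).1 huv
    · exact half _ _ h1
    · exact (half _ _ h1).symm
  · intro j hj
    rw [show s' j = Sum.inl (s j) from if_pos (by omega)]
    refine (SimpleGraph.fromRel_adj _ _ _).2 ?_
    by_cases hjn : j = n
    · subst hjn
      rw [show s' (j + 1) = Sum.inr ⟨true, hne⟩ from if_neg (by omega)]
      refine ⟨?_, Or.inl (Or.inr ⟨false, true, ?_, ?_, m1.symm⟩)⟩
      · intro h; cases h
      · simp [K2TT]
      · rw [m0, h.sy]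
    · rw [show s' (j + 1) = Sum.inl (s (j + 1)) from if_pos (by omega)]
      have := h.adj' j (by omega)
      exact ⟨fun h => this.ne (Sum.inl.inj h), Or.inl (Or.inl ⟨_, _, this, rfl, rfl⟩)⟩

lemma pathTT_inv (n : ℕ) : ∃ f s, PathInv (pathTT n) (n + 1) f s := by
  induction n with
  | zero =>
    refine ⟨fun b : Bool => b.toNat, fun j => (decide (j ≠ 0) : Bool), ?_, ?_, ?_, ?_, ?_, ?_, ?_⟩
    · rfl
    · rfl
    · intro j hj
      interval_cases j <;> rfl
    · intro v; cases v <;> decide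
    · intro v; cases v <;> rfl
    · intro u v huv
      have : u ≠ v := huv.ne
      cases u <;> cases v
      · exact absurd rfl this
      · right; rfl
      · left; rfl
      · exact absurd rfl this
    · intro j hj
      interval_cases j
      change (⊤ : SimpleGraph Bool).Adj _ _
      simp
  | succ n ih =>
    obtain ⟨f, s, h⟩ := ih
    exact pathInv_series h

lemma PathInv.lev {A : TTGraph} {n : ℕ} {f : A.V → ℕ} {s : ℕ → A.V} (h : PathInv A n f s) :
    Lev A n f := by
  refine ⟨?_, ?_, ?_, h.adj, ?_⟩
  · rw [← h.sx]; exact h.fs 0 (Nat.zero_le n)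
  · rw [← h.sy]; exact h.fs n le_rfl
  · intro v h1 h2
    have h3 := h.sf v
    constructor
    · rcases Nat.eq_zero_or_pos (f v) with h0 | h0
      · rw [h0, h.sx] at h3; exact absurd h3.symm h1
      · exact h0
    · rcases (h.le v).eq_or_lt with h0 | h0
      · rw [h0, h.sy] at h3; exact absurd h3.symm h2
      · exact h0
  · intro v a b _ _ _ _ hab
    rw [← h.sf a, ← h.sf b, hab]

lemma PathInv.avoids {A : TTGraph} {q m em : ℕ} {f : A.V → ℕ} {s : ℕ → A.V}
    (h : PathInv A (2 * q + 1) f s) (hq : 0 < q) (hm : q * em < m) {X C S T : Finset ℕ}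
    (hX : X.card = 2 * m + em) (hC : C.card = m + em) (hS : S.card = m) (hT : T.card = m)
    (hSC : Disjoint S C) (hTC : Disjoint C T) :
    Avoids A (2 * m + em) m X {(S, T)} := by
  refine ⟨fun v => pathList q X C S T (f v), ?_, ?_, ?_, ?_⟩
  · simp [h.lev.fx, pathList]
  · simp [h.lev.fy, pathList]
  · intro v
    simp only [pathList]
    split_ifs
    · exact hX
    · rw [Finset.card_union_of_disjoint hSC]; omega
    · rw [Finset.card_union_of_disjoint hTC]; omega
    · exact hX
  · intro φ p1 p2 p3 hQ
    rw [Set.mem_singleton_iff, Prod.mk.injEq] at hQ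
    refine path_count (X := X) (S := S) (T := T) hq hm hC hS (fun j => φ (s j)) (fun j hj => ?_) (fun j _ => p2 _)
      (fun j hj => p3 _ _ (h.adj' j hj)) ?_
    · have := p1 (s j)
      simp only [h.fs j hj] at this
      exact this
    · simp only [h.sx, h.sy]
      exact hQ

lemma exists_theta {q m em : ℕ} (hq : 0 < q) (hm : q * em < m) {X C : Finset ℕ}
    (hX : X.card = 2 * m + em) (hC : C.card = m + em) (hXC : Disjoint X C)
    (P : Finset (Finset ℕ × Finset ℕ))
    (hP : ∀ p ∈ P, p.1 ⊆ X ∧ p.2 ⊆ X ∧ p.1.card = m ∧ p.2.card = m) (hne : P.Nonempty) :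
    ∃ A : TTGraph, IsSP A ∧ (∃ f, Lev A (2 * q + 1) f) ∧ Avoids A (2 * m + em) m X P := by
  classical
  have base : ∀ p : Finset ℕ × Finset ℕ, p.1 ⊆ X ∧ p.2 ⊆ X ∧ p.1.card = m ∧ p.2.card = m →
      ∃ A : TTGraph, IsSP A ∧ (∃ f, Lev A (2 * q + 1) f) ∧ Avoids A (2 * m + em) m X {p} := by
    rintro ⟨S, T⟩ ⟨h1, h2, h3, h4⟩
    obtain ⟨f, s, h⟩ := pathTT_inv (2 * q)
    exact ⟨_, pathTT_isSP (2 * q), ⟨f, h.lev⟩, h.avoids hq hm hX hC h3 h4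
      (hXC.mono_left h1) (hXC.mono_left h2).symm⟩
  induction hne using Finset.Nonempty.cons_induction with
  | singleton p =>
    have := base p (hP p (by simp))
    simpa using this
  | cons p P hp hne ih =>
    obtain ⟨A, a1, ⟨f, a2⟩, a3⟩ := base p (hP p (by simp))
    obtain ⟨B, b1, ⟨g, b2⟩, b3⟩ := ih (fun r hr => hP r (by simp [hr]))
    refine ⟨A.parallel B, IsSP.parallel _ _ _ a1 b1 (equiv_refl _), parallel_lev a2 b2, ?_⟩
    have := parallel_avoids (by omega) a2 b2 a3 b3
    rw [Finset.coe_cons, Set.insert_eq]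
    exact this

/-- Theorem 3: for `0 < ε < 1/q` with `εm` an integer and
`k ∈ {4q-1, 4q, 4q+1, 4q+2}`, there is a series-parallel graph of girth at
least `k` that is not `((2+ε)m, m)`-choosable. -/
theorem stmt_7 (q m em : ℕ) (hq : 0 < q) (hm : 0 < m) (ε : ℝ) (hε : 0 < ε)
    (hem : (em : ℝ) = ε * m) (hεq : ε < 1 / q) (k : ℕ)
    (hk : k ∈ ({4 * q - 1, 4 * q, 4 * q + 1, 4 * q + 2} : Set ℕ)) :
    ∃ A : TTGraph, IsSP A ∧ (k : ℕ∞) ≤ A.G.egirth ∧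
      ¬ Choosable A.G (2 * m + em) m := by
  have hmq : q * em < m := by
    have hq' : (0 : ℝ) < q := by exact_mod_cast hq
    have hm' : (0 : ℝ) < m := by exact_mod_cast hm
    rw [lt_div_iff₀ hq'] at hεq
    have : (q : ℝ) * em < m := by
      rw [hem]
      nlinarith
    exact_mod_cast this
  have hk' : k ≤ 2 * (2 * q + 1) := by
    simp only [Set.mem_insert_iff, Set.mem_singleton_iff] at hk
    omega
  let X := Finset.range (2 * m + em)
  have hX : X.card = 2 * m + em := Finset.card_range _
  let C := Finset.Ico (2 * m + em) (2 * m + em + (m + em))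
  have hC : C.card = m + em := by simp [C]
  have hXC : Disjoint X C := by
    rw [Finset.disjoint_left]
    intro a ha hb
    simp only [X, C, Finset.mem_range, Finset.mem_Ico] at ha hb
    omega
  obtain ⟨A, h1, ⟨f, h2⟩, L, Lx, Ly, Lc, hL⟩ := exists_theta hq hmq hX hC hXC
    (X.powersetCard m ×ˢ X.powersetCard m)
    (by
      intro p hp
      simp only [Finset.mem_product, Finset.mem_powersetCard] at hp
      tauto)
    (by
      have : (X.powersetCard m).Nonempty := Finset.powersetCard_nonempty.2 (by omega)
      exact this.product this)
  refine ⟨A, h1, le_trans (by exact_mod_cast hk') (lev_girth h2), ?_⟩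
  intro hch
  obtain ⟨φ, p1, p2, p3⟩ := hch L Lc
  refine hL φ p1 p2 p3 ?_
  have e1 := p1 A.x
  have e2 := p1 A.y
  rw [Lx] at e1
  rw [Ly] at e2
  simp [Finset.mem_powersetCard, e1, e2, p2]
end

section
/- Let q be a positive integer and k ∈ {4q-1, 4q, 4q+1, 4q+2}. The strong fractional choice number of the class Q_k of series-parallel graphs of girth at least k equals 2 + 1/q. That is: (a) for every positive integer m, every G in Q_k is (⌈(2+1/q)m⌉, m)-choosable; and (b) for every real r < 2 + 1/q, there exist a positive integer m and a graph G in Q_k that is not (⌈rm⌉, m)-choosable. -/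
open SimpleGraph

namespace SPChoice

/-- Sequence `ψ` of `m`-sets from lists `L` along a path with vertices `0, …, n`. -/
def OKseq (L : ℕ → Finset ℕ) (m n : ℕ) (ψ : ℕ → Finset ℕ) : Prop :=
  (∀ i ≤ n, ψ i ⊆ L i ∧ (ψ i).card = m) ∧ ∀ i < n, Disjoint (ψ i) (ψ (i + 1))

lemma OKseq.snoc {L : ℕ → Finset ℕ} {m n : ℕ} {ψ : ℕ → Finset ℕ} (h : OKseq L m n ψ)
    {T : Finset ℕ} (hT : T ⊆ L (n + 1)) (hTm : T.card = m) (hd : Disjoint (ψ n) T) :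
    OKseq L m (n + 1) (Function.update ψ (n + 1) T) := by
  constructor
  · intro i hi
    rcases Nat.lt_or_ge n i with h' | h'
    · obtain rfl : i = n + 1 := by omega
      simp [hT, hTm]
    · rw [Function.update_of_ne (by omega)]
      exact h.1 i h'
  · intro i hi
    rw [Function.update_of_ne (by omega)]
    rcases Nat.lt_or_ge i n with h' | h'
    · rw [Function.update_of_ne (by omega)]
      exact h.2 i h'
    · obtain rfl : i = n := by omega
      simpa using hd

lemma greedy_left (L : ℕ → Finset ℕ) (m a : ℕ) (ha : 2 * m ≤ a) (n : ℕ)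
    (hL : ∀ i ≤ n, (L i).card = a) (S : Finset ℕ) (hS : S ⊆ L 0) (hSm : S.card = m) :
    ∃ ψ, OKseq L m n ψ ∧ ψ 0 = S := by
  induction n with
  | zero => exact ⟨fun _ => S, ⟨fun i hi => by obtain rfl : i = 0 := by omega
                                               exact ⟨hS, hSm⟩, fun i hi => by omega⟩, rfl⟩
  | succ n ih =>
    obtain ⟨ψ, h1, h2⟩ := ih (fun i hi => hL i (by omega))
    have h3 : m ≤ (L (n + 1) \ ψ n).card := by
      have := Finset.le_card_sdiff (ψ n) (L (n + 1))
      have := hL (n + 1) le_rfl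
      have := (h1.1 n le_rfl).2
      omega
    obtain ⟨T, hT, hTm⟩ := Finset.exists_subset_card_eq h3
    refine ⟨_, h1.snoc (hT.trans Finset.sdiff_subset) hTm ?_, ?_⟩
    · exact (Finset.disjoint_of_subset_left hT Finset.sdiff_disjoint).symm
    · rw [Function.update_of_ne (by omega), h2]

lemma OKseq.rev {L : ℕ → Finset ℕ} {m n : ℕ} {ψ : ℕ → Finset ℕ}
    (h : OKseq (fun i => L (n - i)) m n ψ) : OKseq L m n (fun i => ψ (n - i)) := by
  constructor
  · intro i hi
    have := h.1 (n - i) (by omega)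
    simpa [show n - (n - i) = i by omega] using this
  · intro i hi
    have := h.2 (n - (i + 1)) (by omega)
    rw [show n - (i + 1) + 1 = n - i by omega] at this
    exact this.symm

lemma greedy_right (L : ℕ → Finset ℕ) (m a : ℕ) (ha : 2 * m ≤ a) (n : ℕ)
    (hL : ∀ i ≤ n, (L i).card = a) (S : Finset ℕ) (hS : S ⊆ L n) (hSm : S.card = m) :
    ∃ ψ, OKseq L m n ψ ∧ ψ n = S := by
  obtain ⟨ψ, h1, h2⟩ := greedy_left (fun i => L (n - i)) m a ha n
    (fun i hi => hL _ (by omega)) S (by simpa using hS) hSm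
  exact ⟨_, h1.rev, by simpa using h2⟩

/-- The combinatorial heart of the upper bound. -/
lemma thread_step (m e t0 : ℕ) (L₀ L₁ F : Finset ℕ) (h0 : L₀.card = 2 * m + e)
    (h1 : L₁.card = 2 * m + e) (hF : F.card = m + e) :
    ∃ F', F'.card = m + e ∧ ∀ T' : Finset ℕ, T'.card = m → (T' ∩ F').card ≤ t0 + e →
      ∃ T U : Finset ℕ, T ⊆ L₀ ∧ T.card = m ∧ (T ∩ F).card ≤ t0 ∧ U ⊆ L₁ ∧ U.card = m ∧
        Disjoint T U ∧ Disjoint U T' := by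
  have hG : m ≤ (L₀ \ F).card := by
    have := Finset.le_card_sdiff F L₀
    omega
  obtain ⟨G, hGs, hGm⟩ := Finset.exists_subset_card_eq hG
  have hF' : m + e ≤ (L₁ \ G).card := by
    have := Finset.le_card_sdiff G L₁
    omega
  obtain ⟨F', hFs, hFm⟩ := Finset.exists_subset_card_eq hF'
  refine ⟨F', hFm, fun T' hT' hTF => ?_⟩
  have hFL : F' ⊆ L₁ := hFs.trans Finset.sdiff_subset
  have hFG : Disjoint F' G := Finset.disjoint_of_subset_left hFs Finset.sdiff_disjoint
  set t := (T' ∩ F').card with ht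
  have htm : t ≤ m := by rw [← hT']; exact Finset.card_le_card Finset.inter_subset_left
  -- number of extra elements
  set s := t - e with hs
  have hH : s ≤ ((L₁ \ F') \ T').card := by
    have c1 : (L₁ \ F').card = m := by rw [Finset.card_sdiff_of_subset hFL]; omega
    have c2 : ((L₁ \ F') \ T').card = ((L₁ \ F') \ (T' \ F')).card := by
      congr 1; ext x; simp only [Finset.mem_sdiff]; tauto
    have c3 := Finset.le_card_sdiff (T' \ F') (L₁ \ F')
    have c4 : (T' \ F').card + (T' ∩ F').card = T'.card := Finset.card_sdiff_add_card_inter _ _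
    omega
  obtain ⟨W, hWs, hWm⟩ := Finset.exists_subset_card_eq hH
  have hK : m - s ≤ (F' \ T').card := by
    have c4 : (F' \ T').card + (F' ∩ T').card = F'.card := Finset.card_sdiff_add_card_inter _ _
    rw [Finset.inter_comm] at c4
    omega
  obtain ⟨K, hKs, hKm⟩ := Finset.exists_subset_card_eq hK
  have hWK : Disjoint W K := by
    rw [Finset.disjoint_left]; intro x hx hx'
    have := hWs hx; have := hKs hx'
    simp only [Finset.mem_sdiff] at *; tauto
  have hUm : (W ∪ K).card = m := by
    rw [Finset.card_union_of_disjoint hWK]; omega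
  have hsub : G \ (W ∪ K) ⊆ L₀ \ (W ∪ K) :=
    Finset.sdiff_subset_sdiff (hGs.trans Finset.sdiff_subset) le_rfl
  have hGU : m - s ≤ (G \ (W ∪ K)).card := by
    have : G \ (W ∪ K) = G \ W := by
      ext x
      simp only [Finset.mem_sdiff, Finset.mem_union]
      constructor
      · tauto
      · rintro ⟨h1, h2⟩
        refine ⟨h1, ?_⟩
        rintro (h | h)
        · exact h2 h
        · have := hKs h
          exact (Finset.disjoint_left.1 hFG) (Finset.mem_sdiff.1 this).1 h1
    rw [this]
    have := Finset.le_card_sdiff W G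
    omega
  have hGU2 : (G \ (W ∪ K)).card ≤ m := by
    rw [← hGm]; exact Finset.card_le_card Finset.sdiff_subset
  have hLU : m ≤ (L₀ \ (W ∪ K)).card := by
    have := Finset.le_card_sdiff (W ∪ K) L₀
    omega
  obtain ⟨T, hT1, hT2, hTm⟩ := Finset.exists_subsuperset_card_eq hsub hGU2 hLU
  refine ⟨T, W ∪ K, hT2.trans Finset.sdiff_subset, hTm, ?_, ?_, hUm, ?_, ?_⟩
  · have c1 : T ∩ F ⊆ T \ (G \ (W ∪ K)) := by
      intro x hx
      simp only [Finset.mem_inter, Finset.mem_sdiff] at hx ⊢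
      refine ⟨hx.1, fun h => ?_⟩
      exact (Finset.mem_sdiff.1 (hGs h.1)).2 hx.2
    have c2 := Finset.card_le_card c1
    rw [Finset.card_sdiff_of_subset hT1] at c2
    omega
  · exact Finset.union_subset
      ((hWs.trans Finset.sdiff_subset).trans Finset.sdiff_subset)
      ((hKs.trans Finset.sdiff_subset).trans hFL)
  · exact Finset.disjoint_of_subset_left hT2 Finset.sdiff_disjoint
  · rw [Finset.disjoint_union_left]
    exact ⟨Finset.disjoint_of_subset_left hWs Finset.sdiff_disjoint,
      Finset.disjoint_of_subset_left hKs Finset.sdiff_disjoint⟩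

lemma thread_even (m e : ℕ) (L : ℕ → Finset ℕ) (j : ℕ)
    (hL : ∀ i ≤ 2 * j, (L i).card = 2 * m + e)
    (S : Finset ℕ) (hS : S ⊆ L 0) (hSm : S.card = m) :
    ∃ F : Finset ℕ, F.card = m + e ∧ ∀ T ⊆ L (2 * j), T.card = m → (T ∩ F).card ≤ j * e →
      ∃ ψ, OKseq L m (2 * j) ψ ∧ ψ 0 = S ∧ ψ (2 * j) = T := by
  induction j with
  | zero =>
    refine ⟨L 0 \ S, ?_, ?_⟩
    · rw [Finset.card_sdiff_of_subset hS, hL 0 le_rfl]; omega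
    · intro T hT hTm hc
      have : T = S := by
        apply Finset.eq_of_subset_of_card_le _ (by omega)
        intro x hx
        by_contra hxS
        have : x ∈ T ∩ (L 0 \ S) := by
          simp only [Finset.mem_inter, Finset.mem_sdiff]; exact ⟨hx, hT hx, hxS⟩
        have : 0 < (T ∩ (L 0 \ S)).card := Finset.card_pos.2 ⟨x, this⟩
        omega
      subst this
      exact ⟨fun _ => T, ⟨fun i hi => by obtain rfl : i = 0 := by omega
                                         exact ⟨hS, hSm⟩, fun i hi => by omega⟩, rfl, rfl⟩
  | succ j ih =>
    obtain ⟨F, hF, h⟩ := ih (fun i hi => hL i (by omega))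
    obtain ⟨F', hF', h'⟩ := thread_step m e (j * e) (L (2 * j)) (L (2 * j + 1)) F
      (hL _ (by omega)) (hL _ (by omega)) hF
    refine ⟨F', hF', fun T' hT' hTm hc => ?_⟩
    obtain ⟨T, U, a1, a2, a3, a4, a5, a6, a7⟩ := h' T' hTm (by rw [Nat.succ_mul] at hc; exact hc)
    obtain ⟨ψ, b1, b2, b3⟩ := h T a1 a2 a3
    have c1 := b1.snoc a4 a5 (by rw [b3]; exact a6)
    have c2 := c1.snoc hT' hTm (by simpa using a7)
    refine ⟨_, c2, ?_, ?_⟩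
    · rw [Function.update_of_ne (by omega), Function.update_of_ne (by omega), b2]
    · rw [show 2 * (j + 1) = 2 * j + 1 + 1 by ring]; simp

lemma thread (m e q n : ℕ) (he : m ≤ q * e) (hn : 2 * q ≤ n) (L : ℕ → Finset ℕ)
    (hL : ∀ i ≤ n, (L i).card = 2 * m + e)
    (S T : Finset ℕ) (hS : S ⊆ L 0) (hSm : S.card = m) (hT : T ⊆ L n) (hTm : T.card = m) :
    ∃ ψ, OKseq L m n ψ ∧ ψ 0 = S ∧ ψ n = T := by
  induction n, hn using Nat.le_induction generalizing T with
  | base =>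
    obtain ⟨F, hF, h⟩ := thread_even m e L q hL S hS hSm
    exact h T hT hTm (le_trans (Finset.card_le_card Finset.inter_subset_left) (by omega))
  | succ n hn ih =>
    have h3 : m ≤ (L n \ T).card := by
      have := Finset.le_card_sdiff T (L n)
      have := hL n (by omega)
      omega
    obtain ⟨U, hU, hUm⟩ := Finset.exists_subset_card_eq h3
    obtain ⟨ψ, b1, b2, b3⟩ := ih (fun i hi => hL i (by omega)) U (hU.trans Finset.sdiff_subset) hUm
    refine ⟨_, b1.snoc hT hTm ?_, ?_, ?_⟩
    · rw [b3]; exact Finset.disjoint_of_subset_left hU Finset.sdiff_disjoint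
    · rw [Function.update_of_ne (by omega), b2]
    · simp

/-! ### Gluing -/


section glue
variable (A B : TTGraph)

lemma par_adj {u w : (A.parallel B).V} (h : (A.parallel B).G.Adj u w) :
    (∃ a b, A.G.Adj a b ∧ u = Sum.inl a ∧ w = Sum.inl b) ∨
    (∃ a b, B.G.Adj a b ∧ u = A.pmap B a ∧ w = A.pmap B b) := by
  have h' := (SimpleGraph.fromRel_adj _ _ _).1 h
  rcases h'.2 with h | h
  · exact h
  · rcases h with ⟨a, b, h1, h2, h3⟩ | ⟨a, b, h1, h2, h3⟩
    · exact Or.inl ⟨b, a, h1.symm, h3, h2⟩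
    · exact Or.inr ⟨b, a, h1.symm, h3, h2⟩

lemma ser_adj {u w : (A.series B).V} (h : (A.series B).G.Adj u w) :
    (∃ a b, A.G.Adj a b ∧ u = Sum.inl a ∧ w = Sum.inl b) ∨
    (∃ a b, B.G.Adj a b ∧ u = A.smap B a ∧ w = A.smap B b) := by
  have h' := (SimpleGraph.fromRel_adj _ _ _).1 h
  rcases h'.2 with h | h
  · exact h
  · rcases h with ⟨a, b, h1, h2, h3⟩ | ⟨a, b, h1, h2, h3⟩
    · exact Or.inl ⟨b, a, h1.symm, h3, h2⟩
    · exact Or.inr ⟨b, a, h1.symm, h3, h2⟩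

lemma pmap_x : A.pmap B B.x = Sum.inl A.x := dif_pos rfl

lemma pmap_y (h : B.x ≠ B.y) : A.pmap B B.y = Sum.inl A.y :=
  (dif_neg h.symm).trans (dif_pos rfl)

lemma pmap_o {v : B.V} (h : v ≠ B.x) (h' : v ≠ B.y) : A.pmap B v = Sum.inr ⟨v, h, h'⟩ :=
  (dif_neg h).trans (dif_neg h')

lemma smap_x : A.smap B B.x = Sum.inl A.y := dif_pos rfl

lemma smap_o {v : B.V} (h : v ≠ B.x) : A.smap B v = Sum.inr ⟨v, h⟩ :=
  dif_neg h

lemma pmap_inj (hA : A.x ≠ A.y) : Function.Injective (A.pmap B) := by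
  intro u v h
  by_cases h1 : u = B.x <;> by_cases h2 : v = B.x
  · rw [h1, h2]
  · by_cases h3 : v = B.y
    · rw [h1, pmap_x, h3, pmap_y A B (fun h => h2 (h3.trans h.symm))] at h
      exact absurd (Sum.inl.inj h) hA
    · rw [h1, pmap_x, pmap_o A B h2 h3] at h
      cases h
  · by_cases h3 : u = B.y
    · rw [h2, pmap_x, h3, pmap_y A B (fun h => h1 (h3.trans h.symm))] at h
      exact absurd (Sum.inl.inj h).symm hA
    · rw [h2, pmap_x, pmap_o A B h1 h3] at h
      cases h
  · by_cases h3 : u = B.y <;> by_cases h4 : v = B.y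
    · rw [h3, h4]
    · rw [h3, pmap_y A B (fun h => h1 (h3.trans h.symm)), pmap_o A B h2 h4] at h
      cases h
    · rw [h4, pmap_y A B (fun h => h2 (h4.trans h.symm)), pmap_o A B h1 h3] at h
      cases h
    · rw [pmap_o A B h1 h3, pmap_o A B h2 h4] at h
      exact congrArg Subtype.val (Sum.inr.inj h)

lemma smap_inj : Function.Injective (A.smap B) := by
  intro u v h
  by_cases h1 : u = B.x <;> by_cases h2 : v = B.x
  · rw [h1, h2]
  · rw [h1, smap_x, smap_o A B h2] at h
    cases h
  · rw [h2, smap_x, smap_o A B h1] at h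
    cases h
  · rw [smap_o A B h1, smap_o A B h2] at h
    exact congrArg Subtype.val (Sum.inr.inj h)

lemma inl_inj_p : Function.Injective (Sum.inl : A.V → A.pV B) := Sum.inl_injective
lemma inl_inj_s : Function.Injective (Sum.inl : A.V → A.sV B) := Sum.inl_injective

lemma par_adj_l {u w : A.V} (h : A.G.Adj u w) :
    (A.parallel B).G.Adj (Sum.inl u : A.pV B) (Sum.inl w : A.pV B) :=
  (SimpleGraph.fromRel_adj _ _ _).2
    ⟨fun h' => h.ne (inl_inj_p A B h'), Or.inl (Or.inl ⟨u, w, h, rfl, rfl⟩)⟩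

lemma ser_adj_l {u w : A.V} (h : A.G.Adj u w) :
    (A.series B).G.Adj (Sum.inl u : A.sV B) (Sum.inl w : A.sV B) :=
  (SimpleGraph.fromRel_adj _ _ _).2
    ⟨fun h' => h.ne (inl_inj_s A B h'), Or.inl (Or.inl ⟨u, w, h, rfl, rfl⟩)⟩

lemma par_adj_r (hA : A.x ≠ A.y) {u w : B.V} (h : B.G.Adj u w) :
    (A.parallel B).G.Adj (A.pmap B u) (A.pmap B w) :=
  (SimpleGraph.fromRel_adj _ _ _).2
    ⟨fun h' => h.ne (pmap_inj A B hA h'), Or.inl (Or.inr ⟨u, w, h, rfl, rfl⟩)⟩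

lemma ser_adj_r {u w : B.V} (h : B.G.Adj u w) :
    (A.series B).G.Adj (A.smap B u) (A.smap B w) :=
  (SimpleGraph.fromRel_adj _ _ _).2
    ⟨fun h' => h.ne (smap_inj A B h'), Or.inl (Or.inr ⟨u, w, h, rfl, rfl⟩)⟩

lemma pglue {α : Type*} (hB : B.x ≠ B.y) (f : A.V → α) (g : B.V → α) (hx : f A.x = g B.x)
    (hy : f A.y = g B.y) :
    ∃ φ : A.pV B → α, (∀ a, φ (Sum.inl a) = f a) ∧ ∀ b, φ (A.pmap B b) = g b := by
  refine ⟨Sum.elim f (fun b => g b.1), fun a => rfl, fun b => ?_⟩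
  by_cases h1 : b = B.x
  · subst h1; rw [pmap_x]; exact hx
  · by_cases h2 : b = B.y
    · subst h2; rw [pmap_y A B hB]; exact hy
    · rw [pmap_o A B h1 h2]; rfl

lemma sglue {α : Type*} (f : A.V → α) (g : B.V → α) (hx : f A.y = g B.x) :
    ∃ φ : A.sV B → α, (∀ a, φ (Sum.inl a) = f a) ∧ ∀ b, φ (A.smap B b) = g b := by
  refine ⟨Sum.elim f (fun b => g b.1), fun a => rfl, fun b => ?_⟩
  by_cases h1 : b = B.x
  · subst h1; rw [smap_x]; exact hx
  · rw [smap_o A B h1]; rfl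

lemma p_cases (v : A.pV B) : (∃ a, v = Sum.inl a) ∨ ∃ b, v = A.pmap B b := by
  rcases v with a | b
  · exact Or.inl ⟨a, rfl⟩
  · exact Or.inr ⟨b.1, by rw [pmap_o A B b.2.1 b.2.2]⟩

lemma s_cases (v : A.sV B) : (∃ a, v = Sum.inl a) ∨ ∃ b, v = A.smap B b := by
  rcases v with a | b
  · exact Or.inl ⟨a, rfl⟩
  · exact Or.inr ⟨b.1, by rw [smap_o A B b.2]⟩

end glue

lemma sp_ne {A : TTGraph} (h : IsSP A) : A.x ≠ A.y := by
  induction h with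
  | k2 A h =>
    obtain ⟨e, h1, h2⟩ := h
    intro h
    rw [h, h2] at h1
    exact absurd h1 (by simp [K2TT])
  | parallel A B C _ _ h ihA ihB =>
    obtain ⟨e, h1, h2⟩ := h
    intro h
    rw [h, h2] at h1
    exact ihA (inl_inj_p A B h1).symm
  | series A B C _ _ h ihA ihB =>
    obtain ⟨e, h1, h2⟩ := h
    intro h
    rw [h, h2] at h1
    change A.smap B B.y = Sum.inl A.x at h1
    rw [smap_o A B ihB.symm] at h1
    cases h1

/-- Colourings. -/
def IsCol {V : Type} (G : SimpleGraph V) (L : V → Finset ℕ) (m : ℕ) (φ : V → Finset ℕ) : Prop :=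
  (∀ v, φ v ⊆ L v) ∧ (∀ v, (φ v).card = m) ∧ ∀ u w, G.Adj u w → Disjoint (φ u) (φ w)

lemma col_par (A B : TTGraph) (hB : B.x ≠ B.y) (L : (A.parallel B).V → Finset ℕ) (m : ℕ)
    {f : A.V → Finset ℕ} {g : B.V → Finset ℕ}
    (hf : IsCol A.G (fun a => L (Sum.inl a : A.pV B)) m f)
    (hg : IsCol B.G (fun b => L (A.pmap B b)) m g) (hx : f A.x = g B.x) (hy : f A.y = g B.y) :
    ∃ φ, IsCol (A.parallel B).G L m φ ∧ (∀ a, φ (Sum.inl a : A.pV B) = f a) ∧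
      ∀ b, φ (A.pmap B b) = g b := by
  obtain ⟨φ, h1, h2⟩ := pglue A B hB f g hx hy
  refine ⟨φ, ⟨?_, ?_, ?_⟩, h1, h2⟩
  · intro v
    rcases p_cases A B v with ⟨a, rfl⟩ | ⟨b, rfl⟩
    · rw [h1]; exact hf.1 a
    · rw [h2]; exact hg.1 b
  · intro v
    rcases p_cases A B v with ⟨a, rfl⟩ | ⟨b, rfl⟩
    · rw [h1]; exact hf.2.1 a
    · rw [h2]; exact hg.2.1 b
  · intro u w h
    rcases par_adj A B h with ⟨a, b, hab, rfl, rfl⟩ | ⟨a, b, hab, rfl, rfl⟩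
    · rw [h1, h1]; exact hf.2.2 _ _ hab
    · rw [h2, h2]; exact hg.2.2 _ _ hab

lemma col_ser (A B : TTGraph) (L : (A.series B).V → Finset ℕ) (m : ℕ)
    {f : A.V → Finset ℕ} {g : B.V → Finset ℕ}
    (hf : IsCol A.G (fun a => L (Sum.inl a : A.sV B)) m f)
    (hg : IsCol B.G (fun b => L (A.smap B b)) m g) (hx : f A.y = g B.x) :
    ∃ φ, IsCol (A.series B).G L m φ ∧ (∀ a, φ (Sum.inl a : A.sV B) = f a) ∧
      ∀ b, φ (A.smap B b) = g b := by
  obtain ⟨φ, h1, h2⟩ := sglue A B f g hx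
  refine ⟨φ, ⟨?_, ?_, ?_⟩, h1, h2⟩
  · intro v
    rcases s_cases A B v with ⟨a, rfl⟩ | ⟨b, rfl⟩
    · rw [h1]; exact hf.1 a
    · rw [h2]; exact hg.1 b
  · intro v
    rcases s_cases A B v with ⟨a, rfl⟩ | ⟨b, rfl⟩
    · rw [h1]; exact hf.2.1 a
    · rw [h2]; exact hg.2.1 b
  · intro u w h
    rcases ser_adj A B h with ⟨a, b, hab, rfl, rfl⟩ | ⟨a, b, hab, rfl, rfl⟩
    · rw [h1, h1]; exact hf.2.2 _ _ hab
    · rw [h2, h2]; exact hg.2.2 _ _ hab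

/-! ### Girth, in terms of sequences -/

/-- Every cyclic sequence of distinct vertices has length at least `k`. -/
def Gir {V : Type} (k : ℕ) (G : SimpleGraph V) : Prop :=
  ∀ (n : ℕ) (s : ℕ → V), 2 ≤ n → (∀ i ≤ n, ∀ j ≤ n, s i = s j → i = j) →
    (∀ i < n, G.Adj (s i) (s (i + 1))) → G.Adj (s n) (s 0) → k ≤ n + 1

lemma Gir.mono {V W : Type} {k : ℕ} {G : SimpleGraph V} {H : SimpleGraph W} (h : Gir k H)
    (f : V → W) (hf : Function.Injective f) (ha : ∀ u v, G.Adj u v → H.Adj (f u) (f v)) :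
    Gir k G := fun n s hn hi hs h0 =>
  h n (fun i => f (s i)) hn (fun i hi' j hj hij => hi i hi' j hj (hf hij))
    (fun i hi' => ha _ _ (hs i hi')) (ha _ _ h0)

lemma seq_walk {V : Type} {G : SimpleGraph V} (n : ℕ) (s : ℕ → V)
    (hi : ∀ i ≤ n, ∀ j ≤ n, s i = s j → i = j)
    (hs : ∀ i < n, G.Adj (s i) (s (i + 1))) :
    ∃ p : G.Walk (s n) (s 0), p.IsPath ∧ p.length = n ∧ (∀ v ∈ p.support, ∃ i ≤ n, s i = v) ∧
      ∀ e ∈ p.edges, ∃ i < n, e = s(s (i + 1), s i) := by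
  induction n with
  | zero => exact ⟨.nil, by simp⟩
  | succ n ih =>
    obtain ⟨p, h1, h2, h3, h4⟩ := ih (fun i hi' j hj => hi i (by omega) j (by omega))
      (fun i hi' => hs i (by omega))
    refine ⟨.cons (hs n (by omega)).symm p, ?_, ?_, ?_, ?_⟩
    · rw [SimpleGraph.Walk.cons_isPath_iff]
      refine ⟨h1, fun h => ?_⟩
      obtain ⟨i, hin, h⟩ := h3 _ h
      have := hi i (by omega) (n + 1) le_rfl h
      omega
    · simp [h2]
    · intro v hv
      rw [SimpleGraph.Walk.support_cons, List.mem_cons] at hv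
      rcases hv with rfl | hv
      · exact ⟨n + 1, le_rfl, rfl⟩
      · obtain ⟨i, hi', h⟩ := h3 v hv
        exact ⟨i, by omega, h⟩
    · intro e he
      rw [SimpleGraph.Walk.edges_cons, List.mem_cons] at he
      rcases he with rfl | he
      · exact ⟨n, by omega, rfl⟩
      · obtain ⟨i, hi', h⟩ := h4 e he
        exact ⟨i, by omega, h⟩

lemma gir_of_egirth {V : Type} {k : ℕ} {G : SimpleGraph V} (h : (k : ℕ∞) ≤ G.egirth) :
    Gir k G := by
  intro n s hn hi hs h0
  obtain ⟨p, h1, h2, h3, h4⟩ := seq_walk n s hi hs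
  have hc : (SimpleGraph.Walk.cons h0.symm p).IsCycle := by
    rw [SimpleGraph.Walk.cons_isCycle_iff]
    refine ⟨h1, fun he => ?_⟩
    obtain ⟨i, hin, he⟩ := h4 _ he
    rw [Sym2.eq_iff] at he
    rcases he with ⟨a, b⟩ | ⟨a, b⟩
    · have := hi _ (by omega) _ (by omega) a
      omega
    · have := hi _ (by omega) _ (by omega) a
      have := hi _ (by omega) _ (by omega) b
      omega
  have := SimpleGraph.le_egirth.1 h _ _ hc
  rw [SimpleGraph.Walk.length_cons, h2] at this
  exact_mod_cast this

/-! ### Upper bound -/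

/-- Every precolouring of the terminals extends. -/
def ExtE (A : TTGraph) (L : A.V → Finset ℕ) (m : ℕ) : Prop :=
  ∀ S T, S ⊆ L A.x → S.card = m → T ⊆ L A.y → T.card = m →
    ∃ φ, IsCol A.G L m φ ∧ φ A.x = S ∧ φ A.y = T

/-- There is a short path between the terminals, every colouring of which extends. -/
def ExtP (A : TTGraph) (L : A.V → Finset ℕ) (m q : ℕ) : Prop :=
  ∃ (n : ℕ) (t : ℕ → A.V), 1 ≤ n ∧ n < 2 * q ∧ t 0 = A.x ∧ t n = A.y ∧
    (∀ i ≤ n, ∀ j ≤ n, t i = t j → i = j) ∧ (∀ i < n, A.G.Adj (t i) (t (i + 1))) ∧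
    ∀ ψ, OKseq (fun i => L (t i)) m n ψ → ∃ φ, IsCol A.G L m φ ∧ ∀ i ≤ n, φ (t i) = ψ i

/-- The induction statement. -/
def Good (A : TTGraph) (m a q : ℕ) : Prop :=
  ∀ L : A.V → Finset ℕ, (∀ v, (L v).card = a) → ExtE A L m ∨ ExtP A L m q

lemma good_equiv {A C : TTGraph} {m a q : ℕ} (h : C.Equiv A) (hA : Good A m a q) :
    Good C m a q := by
  obtain ⟨e, hx, hy⟩ := h
  intro L hL
  have tr : ∀ φ, IsCol A.G (fun v => L (e.symm v)) m φ → IsCol C.G L m (fun v => φ (e v)) := by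
    intro φ h
    refine ⟨fun v => by simpa using h.1 (e v), fun v => h.2.1 _, fun u w huw => ?_⟩
    exact h.2.2 _ _ (e.map_adj_iff.2 huw)
  have hx' : e.symm A.x = C.x := by rw [← hx]; simp
  have hy' : e.symm A.y = C.y := by rw [← hy]; simp
  rcases hA (fun v => L (e.symm v)) (fun v => hL _) with h | h
  · left
    intro S T h1 h2 h3 h4
    obtain ⟨φ, a1, a2, a3⟩ := h S T (by simpa only [hx'] using h1) h2
      (by simpa only [hy'] using h3) h4
    exact ⟨_, tr φ a1, by simp only [hx, a2], by simp only [hy, a3]⟩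
  · right
    obtain ⟨n, t, h1, h2, h3, h4, h5, h6, h7⟩ := h
    refine ⟨n, fun i => e.symm (t i), h1, h2, by simp only [h3, hx'], by simp only [h4, hy'],
      fun i hi j hj hij => h5 i hi j hj (e.symm.injective hij),
      fun i hi => e.symm.map_adj_iff.2 (h6 i hi), fun ψ hψ => ?_⟩
    obtain ⟨φ, a1, a2⟩ := h7 ψ hψ
    exact ⟨_, tr φ a1, fun i hi => by simpa using a2 i hi⟩

lemma good_k2 (m a q : ℕ) (hq : 0 < q) : Good K2TT m a q := by
  intro L hL
  right
  refine ⟨1, fun i => if i = 0 then false else true, le_rfl, by omega, rfl, rfl, ?_, ?_, ?_⟩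
  · intro i hi j hj
    interval_cases i <;> interval_cases j <;> simp
  · intro i hi
    interval_cases i
    simp [K2TT]
  · intro ψ hψ
    have h0 := hψ.1 0 (by omega)
    have h1 := hψ.1 1 (by omega)
    have hd := hψ.2 0 (by omega)
    refine ⟨fun b : Bool => if b then ψ 1 else ψ 0, ⟨?_, ?_, ?_⟩, ?_⟩
    · rintro (_ | _)
      · simpa using h0.1
      · simpa using h1.1
    · rintro (_ | _)
      · simpa using h0.2
      · simpa using h1.2
    · rintro (_ | _) (_ | _) h
      · exact absurd rfl h.ne
      · simpa using hd
      · simpa using hd.symm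
      · exact absurd rfl h.ne
    · intro i hi
      interval_cases i <;> simp

lemma good_series {A B : TTGraph} {m e q : ℕ} (he : m ≤ q * e)
    (hA : Good A m (2 * m + e) q) (hB : Good B m (2 * m + e) q) :
    Good (A.series B) m (2 * m + e) q := by
  intro L hL
  have hyx : (Sum.inl A.y : A.sV B) = A.smap B B.x := (smap_x A B).symm
  rcases hA (fun a => L (Sum.inl a : A.sV B)) (fun v => hL _) with hEA | hPA <;>
  rcases hB (fun b => L (A.smap B b)) (fun v => hL _) with hEB | hPB
  · left
    intro S T h1 h2 h3 h4
    obtain ⟨U, hU, hUm⟩ := Finset.exists_subset_card_eq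
      (show m ≤ (L (Sum.inl A.y : A.sV B)).card from (show m ≤ 2 * m + e by omega).trans (hL _).ge)
    obtain ⟨f, f1, f2, f3⟩ := hEA S U h1 h2 hU hUm
    obtain ⟨g, g1, g2, g3⟩ := hEB U T (hU.trans (congrArg L hyx).subset) hUm h3 h4
    obtain ⟨φ, p1, p2, p3⟩ := col_ser A B L m f1 g1 (by rw [f3, g2])
    exact ⟨φ, p1, (p2 A.x).trans f2, (p3 B.y).trans g3⟩
  · left
    intro S T h1 h2 h3 h4
    obtain ⟨n, t, b1, b2, b3, b4, b5, b6, b7⟩ := hPB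
    obtain ⟨ψ, c1, c2⟩ := greedy_right (fun i => L (A.smap B (t i))) m (2 * m + e) (by omega) n
      (fun i _ => hL _) T (by simp only [b4]; exact h3) h4
    obtain ⟨g, g1, g2⟩ := b7 ψ c1
    obtain ⟨f, f1, f2, f3⟩ := hEA S (ψ 0) h1 h2
      (by have := (c1.1 0 (by omega)).1; simp only [b3, ← hyx] at this; exact this)
      (c1.1 0 (by omega)).2
    obtain ⟨φ, p1, p2, p3⟩ := col_ser A B L m f1 g1 (by rw [f3, ← b3, g2 0 (by omega)])
    exact ⟨φ, p1, (p2 A.x).trans f2, (p3 B.y).trans (by rw [← b4, g2 n le_rfl, c2])⟩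
  · left
    intro S T h1 h2 h3 h4
    obtain ⟨n, t, b1, b2, b3, b4, b5, b6, b7⟩ := hPA
    obtain ⟨ψ, c1, c2⟩ := greedy_left (fun i => L (Sum.inl (t i) : A.sV B)) m (2 * m + e)
      (by omega) n (fun i _ => hL _) S (by simp only [b3]; exact h1) h2
    obtain ⟨f, f1, f2⟩ := b7 ψ c1
    obtain ⟨g, g1, g2, g3⟩ := hEB (ψ n) T
      (by have := (c1.1 n le_rfl).1; simp only [b4, hyx] at this; exact this)
      (c1.1 n le_rfl).2 h3 h4
    obtain ⟨φ, p1, p2, p3⟩ := col_ser A B L m f1 g1 (by rw [g2, ← b4, f2 n le_rfl])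
    exact ⟨φ, p1, (p2 A.x).trans (by rw [← b3, f2 0 (by omega), c2]), (p3 B.y).trans g3⟩
  · obtain ⟨n, t, b1, b2, b3, b4, b5, b6, b7⟩ := hPA
    obtain ⟨n', t', b1', b2', b3', b4', b5', b6', b7'⟩ := hPB
    -- concatenated path
    let s : ℕ → A.sV B := fun i => if i ≤ n then Sum.inl (t i) else A.smap B (t' (i - n))
    have sl : ∀ i ≤ n, s i = Sum.inl (t i) := fun i hi => if_pos hi
    have sr : ∀ i, s (n + i) = A.smap B (t' i) := by
      intro i
      rcases Nat.eq_zero_or_pos i with rfl | hi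
      · rw [Nat.add_zero, sl n le_rfl, b4, b3', hyx]
      · have : s (n + i) = A.smap B (t' (n + i - n)) := if_neg (by omega)
        rw [this, Nat.add_sub_cancel_left]
    have s0 : s 0 = (A.series B).x := by rw [sl 0 (by omega), b3]; rfl
    have sn : s (n + n') = (A.series B).y := by rw [sr, b4']; rfl
    have key : ∀ ψ, OKseq (fun i => L (s i)) m (n + n') ψ →
        ∃ φ, IsCol (A.series B).G L m φ ∧ ∀ i ≤ n + n', φ (s i) = ψ i := by
      intro ψ hψ
      obtain ⟨f, f1, f2⟩ := b7 ψ ⟨fun i hi => by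
        have := hψ.1 i (by omega)
        simp only [sl i hi] at this; exact this, fun i hi => hψ.2 i (by omega)⟩
      obtain ⟨g, g1, g2⟩ := b7' (fun i => ψ (n + i)) ⟨fun i hi => by
        have := hψ.1 (n + i) (by omega)
        simp only [sr i] at this; exact this, fun i hi => hψ.2 (n + i) (by omega)⟩
      obtain ⟨φ, p1, p2, p3⟩ := col_ser A B L m f1 g1
        (by rw [← b4, f2 n le_rfl, ← b3', g2 0 (by omega)]; rfl)
      refine ⟨φ, p1, fun i hi => ?_⟩
      rcases Nat.le_total i n with h | h
      · rw [sl i h, p2, f2 i h]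
      · obtain ⟨j, rfl⟩ := Nat.exists_eq_add_of_le h
        rw [sr, p3, g2 j (by omega)]
    rcases Nat.lt_or_ge (n + n') (2 * q) with hlt | hge
    · right
      refine ⟨n + n', s, by omega, hlt, s0, sn, ?_, ?_, key⟩
      · have mixed : ∀ i ≤ n, ∀ j ≤ n', s i = s (n + j) → i = n + j := by
          intro i hi j hj h
          rcases Nat.eq_zero_or_pos j with rfl | hj0
          · rw [Nat.add_zero, sl i hi, sl n le_rfl] at h
            have := b5 i hi n le_rfl (inl_inj_s A B h)
            omega
          · rw [sl i hi, sr, smap_o A B (fun h => by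
              rw [← b3'] at h
              have := b5' j hj 0 (by omega) h
              omega)] at h
            cases h
        intro i hi j hj h
        rcases Nat.le_total i n with h1 | h1 <;> rcases Nat.le_total j n with h2 | h2
        · rw [sl i h1, sl j h2] at h
          exact b5 i h1 j h2 (inl_inj_s A B h)
        · obtain ⟨j', rfl⟩ := Nat.exists_eq_add_of_le h2
          exact mixed i h1 j' (by omega) h
        · obtain ⟨i', rfl⟩ := Nat.exists_eq_add_of_le h1
          exact (mixed j h2 i' (by omega) h.symm).symm
        · obtain ⟨j', rfl⟩ := Nat.exists_eq_add_of_le h2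
          obtain ⟨i', rfl⟩ := Nat.exists_eq_add_of_le h1
          rw [sr, sr] at h
          rw [b5' i' (by omega) j' (by omega) (smap_inj A B h)]
      · intro i hi
        rcases Nat.lt_or_ge i n with h | h
        · rw [sl i (by omega), sl (i + 1) (by omega)]
          exact ser_adj_l A B (b6 i h)
        · obtain ⟨j, rfl⟩ := Nat.exists_eq_add_of_le h
          rw [Nat.add_assoc, sr, sr]
          exact ser_adj_r A B (b6' j (by omega))
    · left
      intro S T h1 h2 h3 h4
      obtain ⟨ψ, c1, c2, c3⟩ := thread m e q (n + n') he hge (fun i => L (s i)) (fun i _ => hL _)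
        S T (by simp only [s0]; exact h1) h2 (by simp only [sn]; exact h3) h4
      obtain ⟨φ, p1, p2⟩ := key ψ c1
      exact ⟨φ, p1, by rw [← s0, p2 0 (by omega), c2], by rw [← sn, p2 _ le_rfl, c3]⟩

lemma good_parallel {A B : TTGraph} {m a q k : ℕ} (hk : 4 * q ≤ k + 1)
    (hA : Good A m a q) (hB : Good B m a q)
    (hAn : A.x ≠ A.y) (hBn : B.x ≠ B.y) (hg : Gir k (A.parallel B).G) :
    Good (A.parallel B) m a q := by
  intro L hL
  have hxx : (Sum.inl A.x : A.pV B) = A.pmap B B.x := (pmap_x A B).symm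
  have hyy : (Sum.inl A.y : A.pV B) = A.pmap B B.y := (pmap_y A B hBn).symm
  rcases hA (fun a => L (Sum.inl a : A.pV B)) (fun v => hL _) with hEA | hPA <;>
  rcases hB (fun b => L (A.pmap B b)) (fun v => hL _) with hEB | hPB
  · left
    intro S T h1 h2 h3 h4
    obtain ⟨f, f1, f2, f3⟩ := hEA S T h1 h2 h3 h4
    obtain ⟨g, g1, g2, g3⟩ := hEB S T (h1.trans (congrArg L hxx).subset) h2 (h3.trans (congrArg L hyy).subset) h4
    obtain ⟨φ, p1, p2, p3⟩ := col_par A B hBn L m f1 g1 (by rw [f2, g2]) (by rw [f3, g3])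
    exact ⟨φ, p1, (p2 A.x).trans f2, (p2 A.y).trans f3⟩
  · right
    obtain ⟨n, t, b1, b2, b3, b4, b5, b6, b7⟩ := hPB
    refine ⟨n, fun i => A.pmap B (t i), b1, b2, by simp only [b3, ← hxx]; rfl,
      by simp only [b4, ← hyy]; rfl, fun i hi j hj h => b5 i hi j hj (pmap_inj A B hAn h),
      fun i hi => par_adj_r A B hAn (b6 i hi), fun ψ hψ => ?_⟩
    obtain ⟨g, g1, g2⟩ := b7 ψ hψ
    have u1 := hψ.1 0 (by omega)
    have u2 := hψ.1 n le_rfl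
    simp only [b3, b4, ← hxx, ← hyy] at u1 u2
    obtain ⟨f, f1, f2, f3⟩ := hEA (ψ 0) (ψ n) u1.1 u1.2 u2.1 u2.2
    obtain ⟨φ, p1, p2, p3⟩ := col_par A B hBn L m f1 g1 (by rw [f2, ← b3, g2 0 (by omega)])
      (by rw [f3, ← b4, g2 n le_rfl])
    exact ⟨φ, p1, fun i hi => by rw [p3, g2 i hi]⟩
  · right
    obtain ⟨n, t, b1, b2, b3, b4, b5, b6, b7⟩ := hPA
    refine ⟨n, fun i => (Sum.inl (t i) : A.pV B), b1, b2, by simp only [b3]; rfl,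
      by simp only [b4]; rfl, fun i hi j hj h => b5 i hi j hj (inl_inj_p A B h),
      fun i hi => par_adj_l A B (b6 i hi), fun ψ hψ => ?_⟩
    obtain ⟨f, f1, f2⟩ := b7 ψ hψ
    have u1 := hψ.1 0 (by omega)
    have u2 := hψ.1 n le_rfl
    simp only [b3, b4, hxx, hyy] at u1 u2
    obtain ⟨g, g1, g2, g3⟩ := hEB (ψ 0) (ψ n) u1.1 u1.2 u2.1 u2.2
    obtain ⟨φ, p1, p2, p3⟩ := col_par A B hBn L m f1 g1 (by rw [g2, ← b3, f2 0 (by omega)])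
      (by rw [g3, ← b4, f2 n le_rfl])
    exact ⟨φ, p1, fun i hi => by rw [p2, f2 i hi]⟩
  · obtain ⟨n, t, b1, b2, b3, b4, b5, b6, b7⟩ := hPA
    obtain ⟨n', t', b1', b2', b3', b4', b5', b6', b7'⟩ := hPB
    rcases Nat.lt_or_ge (n + n') 3 with hlt | hge
    · right
      obtain rfl : n = 1 := by omega
      obtain rfl : n' = 1 := by omega
      refine ⟨1, fun i => (Sum.inl (t i) : A.pV B), b1, b2, by simp only [b3]; rfl,
        by simp only [b4]; rfl, fun i hi j hj h => b5 i hi j hj (inl_inj_p A B h),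
        fun i hi => par_adj_l A B (b6 i hi), fun ψ hψ => ?_⟩
      obtain ⟨f, f1, f2⟩ := b7 ψ hψ
      obtain ⟨g, g1, g2⟩ := b7' ψ ⟨fun i hi => by
        have := hψ.1 i hi
        interval_cases i
        · simp only [b3, hxx] at this
          simp only [b3']; exact this
        · simp only [b4, hyy] at this
          simp only [b4']; exact this, hψ.2⟩
      obtain ⟨φ, p1, p2, p3⟩ := col_par A B hBn L m f1 g1
        (by rw [← b3, ← b3', f2 0 (by omega), g2 0 (by omega)])
        (by rw [← b4, ← b4', f2 1 (by omega), g2 1 (by omega)])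
      exact ⟨φ, p1, fun i hi => by rw [p2, f2 i hi]⟩
    · -- a short cycle
      exfalso
      let s : ℕ → A.pV B := fun i => if i ≤ n then Sum.inl (t i) else A.pmap B (t' (n + n' - i))
      have sl : ∀ i ≤ n, s i = Sum.inl (t i) := fun i hi => if_pos hi
      have sr : ∀ i, n ≤ i → s i = A.pmap B (t' (n + n' - i)) := by
        intro i h
        rcases Nat.eq_or_lt_of_le h with rfl | hi
        · rw [sl n le_rfl, b4, Nat.add_sub_cancel_left, b4', hyy]
        · exact if_neg (by omega)
      have mixed : ∀ i ≤ n, ∀ j, n ≤ j → j ≤ n + n' - 1 → s i = s j → i = j := by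
        intro i hi j hj hj' h
        rcases Nat.eq_or_lt_of_le hj with rfl | hj0
        · rw [sl i hi, sl n le_rfl] at h
          exact b5 i hi n le_rfl (inl_inj_p A B h)
        · rw [sl i hi, sr j hj, pmap_o A B (fun h => by
              rw [← b3'] at h
              have := b5' _ (by omega) 0 (by omega) h
              omega) (fun h => by
              rw [← b4'] at h
              have := b5' _ (by omega) n' (by omega) h
              omega)] at h
          cases h
      have := hg (n + n' - 1) s (by omega) (by
        intro i hi j hj h
        rcases Nat.le_total i n with h1 | h1 <;> rcases Nat.le_total j n with h2 | h2
        · rw [sl i h1, sl j h2] at h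
          exact b5 i h1 j h2 (inl_inj_p A B h)
        · exact mixed i h1 j h2 hj h
        · exact (mixed j h2 i h1 hi h.symm).symm
        · rw [sr i h1, sr j h2] at h
          have := b5' _ (by omega) _ (by omega) (pmap_inj A B hAn h)
          omega) (by
        intro i hi
        rcases Nat.lt_or_ge i n with h | h
        · rw [sl i (by omega), sl (i + 1) (by omega)]
          exact par_adj_l A B (b6 i h)
        · rw [sr i h, sr (i + 1) (by omega)]
          have := b6' (n + n' - (i + 1)) (by omega)
          rw [show n + n' - (i + 1) + 1 = n + n' - i by omega] at this
          exact par_adj_r A B hAn this.symm) (by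
        rw [sr (n + n' - 1) (by omega), sl 0 (by omega), b3, hxx, ← b3']
        have := b6' 0 (by omega)
        rw [show n + n' - (n + n' - 1) = 0 + 1 by omega]
        exact par_adj_r A B hAn this.symm)
      omega

lemma good_of_sp {A : TTGraph} {m e q k : ℕ} (hq : 0 < q) (he : m ≤ q * e) (hk : 4 * q ≤ k + 1)
    (h : IsSP A) (hg : Gir k A.G) : Good A m (2 * m + e) q := by
  induction h with
  | k2 A h => exact good_equiv h (good_k2 m _ q hq)
  | parallel A B C hA hB h ihA ihB =>
    obtain ⟨i, hx, hy⟩ := id h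
    have hg' : Gir k (A.parallel B).G :=
      hg.mono i.symm i.symm.injective (fun u v huv => i.symm.map_adj_iff.2 huv)
    exact good_equiv h (good_parallel hk
      (ihA (hg'.mono _ (inl_inj_p A B) fun _ _ h => par_adj_l A B h))
      (ihB (hg'.mono _ (pmap_inj A B (sp_ne hA)) fun _ _ h => par_adj_r A B (sp_ne hA) h))
      (sp_ne hA) (sp_ne hB) hg')
  | series A B C hA hB h ihA ihB =>
    obtain ⟨i, hx, hy⟩ := id h
    have hg' : Gir k (A.series B).G :=
      hg.mono i.symm i.symm.injective (fun u v huv => i.symm.map_adj_iff.2 huv)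
    exact good_equiv h (good_series he
      (ihA (hg'.mono _ (inl_inj_s A B) fun _ _ h => ser_adj_l A B h))
      (ihB (hg'.mono _ (smap_inj A B) fun _ _ h => ser_adj_r A B h)))

lemma upper {A : TTGraph} {m e q k : ℕ} (hq : 0 < q) (he : m ≤ q * e) (hk : 4 * q ≤ k + 1)
    (h : IsSP A) (hg : (k : ℕ∞) ≤ A.G.egirth) : Choosable A.G (2 * m + e) m := by
  intro L hL
  rcases good_of_sp hq he hk h (gir_of_egirth hg) L hL with h | h
  · obtain ⟨S, hS, hSm⟩ := Finset.exists_subset_card_eq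
      (show m ≤ (L A.x).card by rw [hL]; omega)
    obtain ⟨T, hT, hTm⟩ := Finset.exists_subset_card_eq
      (show m ≤ (L A.y).card by rw [hL]; omega)
    obtain ⟨φ, h, -⟩ := h S T hS hSm hT hTm
    exact ⟨φ, h⟩
  · obtain ⟨n, t, b1, b2, b3, b4, b5, b6, b7⟩ := h
    obtain ⟨S, hS, hSm⟩ := Finset.exists_subset_card_eq
      (show m ≤ (L (t 0)).card by rw [hL]; omega)
    obtain ⟨ψ, c1, -⟩ := greedy_left (fun i => L (t i)) m (2 * m + e) (by omega) n
      (fun i _ => hL _) S hS hSm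
    obtain ⟨φ, h, -⟩ := b7 ψ c1
    exact ⟨φ, h⟩

/-! ### Lower bound -/

/-- `A` is a path with `n` edges between its terminals. -/
def PathLike (A : TTGraph) (n : ℕ) : Prop :=
  ∃ (t : ℕ → A.V) (pos : A.V → ℕ), (∀ v, pos v ≤ n) ∧ (∀ v, t (pos v) = v) ∧
    (∀ i ≤ n, pos (t i) = i) ∧ t 0 = A.x ∧ t n = A.y ∧ (∀ i < n, A.G.Adj (t i) (t (i + 1))) ∧
    ∀ u v, A.G.Adj u v → pos u + 1 = pos v ∨ pos v + 1 = pos u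

lemma equiv_refl (A : TTGraph) : A.Equiv A := ⟨SimpleGraph.Iso.refl, rfl, rfl⟩

lemma path_exists (n : ℕ) : ∃ A, IsSP A ∧ PathLike A (n + 1) := by
  induction n with
  | zero =>
    refine ⟨K2TT, .k2 _ (equiv_refl _), fun i => if i = 0 then false else true,
      fun b : Bool => if b then 1 else 0, ?_, ?_, ?_, rfl, rfl, ?_, ?_⟩
    · rintro (_ | _) <;> simp
    · rintro (_ | _) <;> rfl
    · intro i hi
      interval_cases i <;> simp
    · intro i hi
      interval_cases i
      simp [K2TT]
    · rintro (_ | _) (_ | _) h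
      · exact absurd rfl h.ne
      · simp
      · simp
      · exact absurd rfl h.ne
  | succ n ih =>
    obtain ⟨A, hA, t, pos, h1, h2, h3, h4, h5, h6, h7⟩ := ih
    refine ⟨A.series K2TT, .series A K2TT _ hA (.k2 _ (equiv_refl _)) (equiv_refl _), ?_⟩
    obtain ⟨pos', p1, p2⟩ := sglue A K2TT pos (fun b : Bool => if b then n + 2 else n + 1)
      (by rw [← h5, h3 _ le_rfl]; rfl)
    have p2t : pos' (A.smap K2TT true) = n + 2 := p2 true
    have hyx : A.smap K2TT false = Sum.inl A.y := smap_x A K2TT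
    let t' : ℕ → A.sV K2TT := fun i => if i ≤ n + 1 then Sum.inl (t i) else A.smap K2TT true
    have tl : ∀ i ≤ n + 1, t' i = Sum.inl (t i) := fun i hi => if_pos hi
    have tr : t' (n + 2) = A.smap K2TT true := if_neg (by omega)
    have vcases : ∀ v : A.sV K2TT, (∃ a, v = Sum.inl a) ∨ v = A.smap K2TT true := by
      intro v
      rcases s_cases A K2TT v with ⟨a, rfl⟩ | ⟨b, rfl⟩
      · exact Or.inl ⟨a, rfl⟩
      · rcases b with _ | _
        · exact Or.inl ⟨A.y, hyx⟩
        · exact Or.inr rfl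
    refine ⟨t', pos', ?_, ?_, ?_, ?_, ?_, ?_, ?_⟩
    · intro v
      rcases vcases v with ⟨a, rfl⟩ | rfl
      · rw [p1]; have := h1 a; omega
      · rw [p2t]
    · intro v
      rcases vcases v with ⟨a, rfl⟩ | rfl
      · rw [p1, tl _ (h1 a), h2]
      · rw [p2t, tr]
    · intro i hi
      rcases Nat.lt_or_ge i (n + 2) with h | h
      · rw [tl i (by omega), p1, h3 i (by omega)]
      · obtain rfl : i = n + 2 := by omega
        rw [tr, p2t]
    · rw [tl 0 (by omega), h4]; rfl
    · exact tr
    · intro i hi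
      rcases Nat.lt_or_ge i (n + 1) with h | h
      · rw [tl i (by omega), tl (i + 1) (by omega)]
        exact ser_adj_l A K2TT (h6 i h)
      · obtain rfl : i = n + 1 := by omega
        rw [tl _ le_rfl, tr, h5, ← hyx]
        exact ser_adj_r A K2TT (by simp [K2TT])
    · intro u v h
      rcases ser_adj A K2TT h with ⟨a, b, hab, rfl, rfl⟩ | ⟨a, b, hab, rfl, rfl⟩
      · rw [p1, p1]; exact h7 a b hab
      · rw [p2, p2]
        rcases a with _ | _ <;> rcases b with _ | _
        · exact absurd rfl hab.ne
        · simp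
        · simp
        · exact absurd rfl hab.ne

/-- Potentials witnessing that the terminals are at distance at least `n` and the girth is at
least `2 * n`. -/
def Pot (A : TTGraph) (n : ℕ) : Prop :=
  (∃ h : A.V → ℤ, h A.x = 0 ∧ h A.y = n ∧ ∀ u v, A.G.Adj u v → |h u - h v| ≤ 1) ∧
  ∀ u v, A.G.Adj u v → ∃ f : A.V → ℤ, f A.x = 0 ∧ f A.y = n ∧
    (∀ a b, A.G.Adj a b → s(a, b) ≠ s(u, v) → |f a - f b| ≤ 1) ∧ 2 * (n : ℤ) - 1 ≤ |f u - f v|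

lemma walk_pot {V : Type} {G : SimpleGraph V} (f : V → ℤ) {u v : V} (p : G.Walk u v)
    (h : ∀ a b, s(a, b) ∈ p.edges → |f a - f b| ≤ 1) : |f u - f v| ≤ p.length := by
  induction p with
  | nil => simp
  | @cons a b c hab p ih =>
    have h1 := ih (fun x y hxy => h x y (by
      rw [SimpleGraph.Walk.edges_cons]; exact List.mem_cons_of_mem _ hxy))
    have h2 := h a b (by rw [SimpleGraph.Walk.edges_cons]; exact List.mem_cons_self)
    rw [SimpleGraph.Walk.length_cons]
    push_cast
    have := abs_sub_le (f a) (f b) (f c)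
    linarith

lemma pot_girth {A : TTGraph} {n : ℕ} (h : Pot A n) : ((2 * n : ℕ) : ℕ∞) ≤ A.G.egirth := by
  rw [SimpleGraph.le_egirth]
  intro a w hw
  cases w with
  | nil => exact absurd rfl hw.ne_nil
  | @cons _ b _ hab p =>
    rw [SimpleGraph.Walk.cons_isCycle_iff] at hw
    obtain ⟨f, f1, f2, f3, f4⟩ := h.2 a b hab
    have := walk_pot f p (fun x y hxy => f3 x y (p.adj_of_mem_edges hxy)
      (fun h => hw.2 (h ▸ hxy)))
    rw [abs_sub_comm] at this
    rw [SimpleGraph.Walk.length_cons]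
    have : 2 * n ≤ p.length + 1 := by omega
    exact_mod_cast this

lemma pot_path {A : TTGraph} {n : ℕ} (h : PathLike A n) : Pot A n := by
  obtain ⟨t, pos, h1, h2, h3, h4, h5, h6, h7⟩ := h
  have px : pos A.x = 0 := by rw [← h4, h3 0 (by omega)]
  have py : pos A.y = n := by rw [← h5, h3 n le_rfl]
  have pinj : ∀ u v, pos u = pos v → u = v := fun u v h => by rw [← h2 u, ← h2 v, h]
  refine ⟨⟨fun v => pos v, by simp [px], by simp [py], fun u v huv => ?_⟩, ?_⟩
  · rw [abs_le]
    dsimp only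
    rcases h7 u v huv with h | h <;> constructor <;> omega
  · have key : ∀ u v, pos u + 1 = pos v → ∃ f : A.V → ℤ, f A.x = 0 ∧ f A.y = n ∧
        (∀ a b, A.G.Adj a b → s(a, b) ≠ s(u, v) → |f a - f b| ≤ 1) ∧
        2 * (n : ℤ) - 1 ≤ |f u - f v| := by
      intro u v huv
      have hv := h1 v
      refine ⟨fun w => if pos w ≤ pos u then -(pos w : ℤ) else 2 * n - pos w, ?_, ?_, ?_, ?_⟩
      · simp [px]
      · simp only [py]
        rw [if_neg (by omega)]; ring
      · intro a b hab hne
        have hne1 : ¬ (pos a = pos u ∧ pos b = pos v) := fun h => hne (by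
          rw [pinj a u h.1, pinj b v h.2])
        have hne2 : ¬ (pos a = pos v ∧ pos b = pos u) := fun h => hne (by
          rw [pinj a v h.1, pinj b u h.2, Sym2.eq_swap])
        have := h7 a b hab
        rw [abs_le]
        dsimp only
        split_ifs <;> omega
      · dsimp only
        rw [if_pos le_rfl, if_neg (by omega), le_abs]
        right
        omega
    intro u v huv
    rcases h7 u v huv with h | h
    · exact key u v h
    · obtain ⟨f, f1, f2, f3, f4⟩ := key v u h
      refine ⟨f, f1, f2, fun a b hab hne => f3 a b hab (fun h => hne (h.trans Sym2.eq_swap)), ?_⟩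
      rw [abs_sub_comm]; exact f4

lemma pot_par {A B : TTGraph} {n : ℕ} (hB : B.x ≠ B.y)
    (pA : Pot A n) (pB : Pot B n) : Pot (A.parallel B) n := by
  obtain ⟨⟨h, h1, h2, h3⟩, h4⟩ := pA
  obtain ⟨⟨g, g1, g2, g3⟩, g4⟩ := pB
  constructor
  · obtain ⟨φ, p1, p2⟩ := pglue A B hB h g (by rw [h1, g1]) (by rw [h2, g2])
    refine ⟨φ, (p1 _).trans h1, (p1 _).trans h2, fun u v huv => ?_⟩
    rcases par_adj A B huv with ⟨a, b, hab, rfl, rfl⟩ | ⟨a, b, hab, rfl, rfl⟩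
    · rw [p1, p1]; exact h3 _ _ hab
    · rw [p2, p2]; exact g3 _ _ hab
  · intro u v huv
    rcases par_adj A B huv with ⟨a, b, hab, rfl, rfl⟩ | ⟨a, b, hab, rfl, rfl⟩
    · obtain ⟨f, f1, f2, f3, f4⟩ := h4 a b hab
      obtain ⟨φ, p1, p2⟩ := pglue A B hB f g (by rw [f1, g1]) (by rw [f2, g2])
      refine ⟨φ, (p1 _).trans f1, (p1 _).trans f2, fun u v huv hne => ?_, by rw [p1, p1]; exact f4⟩
      rcases par_adj A B huv with ⟨c, d, hcd, rfl, rfl⟩ | ⟨c, d, hcd, rfl, rfl⟩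
      · rw [p1, p1]
        refine f3 _ _ hcd fun h => hne ?_
        rw [Sym2.eq_iff] at h
        rcases h with ⟨rfl, rfl⟩ | ⟨rfl, rfl⟩
        · rfl
        · exact Sym2.eq_swap
      · rw [p2, p2]; exact g3 _ _ hcd
    · obtain ⟨f, f1, f2, f3, f4⟩ := g4 a b hab
      obtain ⟨φ, p1, p2⟩ := pglue A B hB h f (by rw [f1, h1]) (by rw [f2, h2])
      refine ⟨φ, (p1 _).trans h1, (p1 _).trans h2, fun u v huv hne => ?_, by rw [p2, p2]; exact f4⟩
      rcases par_adj A B huv with ⟨c, d, hcd, rfl, rfl⟩ | ⟨c, d, hcd, rfl, rfl⟩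
      · rw [p1, p1]; exact h3 _ _ hcd
      · rw [p2, p2]
        refine f3 _ _ hcd fun h => hne ?_
        rw [Sym2.eq_iff] at h
        rcases h with ⟨rfl, rfl⟩ | ⟨rfl, rfl⟩
        · rfl
        · exact Sym2.eq_swap

/-- Splitting a set contained in a disjoint union. -/
lemma card_split {X B S : Finset ℕ} (h : X ⊆ B ∪ S) : X.card ≤ (X ∩ B).card + (X ∩ S).card := by
  have : X ⊆ (X ∩ B) ∪ (X ∩ S) := by
    intro x hx
    have := h hx
    simp only [Finset.mem_union, Finset.mem_inter] at *
    tauto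
  exact (Finset.card_le_card this).trans (Finset.card_union_le _ _)

lemma card_disj {X Y S : Finset ℕ} (h : Disjoint X Y) :
    (X ∩ S).card + (Y ∩ S).card ≤ S.card := by
  rw [← Finset.card_union_of_disjoint
    (Finset.disjoint_of_subset_left Finset.inter_subset_left
      (Finset.disjoint_of_subset_right Finset.inter_subset_left h))]
  exact Finset.card_le_card
    (Finset.union_subset Finset.inter_subset_right Finset.inter_subset_right)

lemma no_col (m e q : ℕ) (he : q * e < m) (S T B : Finset ℕ) (ψ : ℕ → Finset ℕ)
    (hq : 0 < q) (hSm : S.card = m) (hB : B.card = m + e) (hSB : Disjoint S B)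
    (hm : ∀ i ≤ 2 * q + 1, (ψ i).card = m)
    (hd : ∀ i < 2 * q + 1, Disjoint (ψ i) (ψ (i + 1)))
    (h0 : ψ 0 = S) (hl : ψ (2 * q + 1) = T) (hi : ∀ i, 0 < i → i < 2 * q → ψ i ⊆ B ∪ S)
    (hlast : ψ (2 * q) ⊆ B ∪ T) : False := by
  have key : ∀ i ≤ q, (ψ (2 * i) ∩ B).card ≤ i * e := by
    intro i
    induction i with
    | zero => intro _; simp [h0, Finset.disjoint_iff_inter_eq_empty.1 hSB]
    | succ i ih =>
      intro hiq
      have c0 := ih (by omega)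
      have hX : ψ (2 * i) ⊆ B ∪ S := by
        rcases Nat.eq_zero_or_pos i with rfl | h
        · rw [Nat.mul_zero, h0]; exact Finset.subset_union_right
        · exact hi _ (by omega) (by omega)
      have c1 := card_split hX
      have c2 := card_disj (S := S) (hd (2 * i) (by omega))
      have c3 := card_split (hi (2 * i + 1) (by omega) (by omega))
      have c4 := card_disj (S := B) (hd (2 * i + 1) (by omega))
      have c5 := hm (2 * i) (by omega)
      have c6 := hm (2 * i + 1) (by omega)
      rw [show 2 * (i + 1) = 2 * i + 1 + 1 by ring, Nat.succ_mul i e]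
      omega
  have c0 := key q le_rfl
  have c1 := card_split hlast
  have c2 := hm (2 * q) (by omega)
  have c3 := hd (2 * q) (by omega)
  rw [hl, Finset.disjoint_iff_inter_eq_empty] at c3
  rw [c3, Finset.card_empty] at c1
  omega

/-- `A` with the lists avoids all the pairs of terminal colours in `P`. -/
def Bad (A : TTGraph) (m a : ℕ) (D : Finset ℕ) (P : List (Finset ℕ × Finset ℕ)) : Prop :=
  ∃ L : A.V → Finset ℕ, (∀ v, (L v).card = a) ∧ L A.x = D ∧ L A.y = D ∧
    ∀ φ, IsCol A.G L m φ → (φ A.x, φ A.y) ∉ P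

lemma bad_path {A : TTGraph} (m e q : ℕ) (hq : 0 < q) (he : q * e < m)
    (h : PathLike A (2 * q + 1)) (D B S T : Finset ℕ) (hD : D.card = 2 * m + e)
    (hB : B.card = m + e) (hDB : Disjoint D B) (hS : S ⊆ D) (hSm : S.card = m) (hT : T ⊆ D)
    (hTm : T.card = m) : Bad A m (2 * m + e) D [(S, T)] := by
  obtain ⟨t, pos, h1, h2, h3, h4, h5, h6, h7⟩ := h
  have hSB : Disjoint S B := Finset.disjoint_of_subset_left hS hDB
  have hTB : Disjoint T B := Finset.disjoint_of_subset_left hT hDB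
  have px : pos A.x = 0 := by rw [← h4, h3 0 (by omega)]
  have py : pos A.y = 2 * q + 1 := by rw [← h5, h3 _ le_rfl]
  refine ⟨fun v => if pos v = 0 ∨ pos v = 2 * q + 1 then D else
    if pos v = 2 * q then B ∪ T else B ∪ S, ?_, ?_, ?_, ?_⟩
  · intro v
    dsimp only
    split_ifs
    · exact hD
    · rw [Finset.card_union_of_disjoint hTB.symm]; omega
    · rw [Finset.card_union_of_disjoint hSB.symm]; omega
  · simp [px]
  · simp [py]
  · intro φ hφ hmem
    rw [List.mem_singleton, Prod.mk.injEq] at hmem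
    refine no_col m e q he S T B (fun i => φ (t i)) hq hSm hB hSB (fun i _ => hφ.2.1 _)
      (fun i hi => hφ.2.2 _ _ (h6 i hi)) (by simp only [h4]; exact hmem.1)
      (by simp only [h5]; exact hmem.2) ?_ ?_
    · intro i hi hi2
      have := hφ.1 (t i)
      dsimp only at this
      rw [h3 i (by omega), if_neg (by omega), if_neg (by omega)] at this
      exact this
    · have := hφ.1 (t (2 * q))
      dsimp only at this
      rw [h3 _ (by omega), if_neg (by omega), if_pos rfl] at this
      exact this

lemma bad_par {A B : TTGraph} {m a : ℕ} {D : Finset ℕ} {P Q : List (Finset ℕ × Finset ℕ)}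
    (hAn : A.x ≠ A.y) (hB : B.x ≠ B.y) (hP : Bad A m a D P) (hQ : Bad B m a D Q) :
    Bad (A.parallel B) m a D (P ++ Q) := by
  obtain ⟨L, l1, l2, l3, l4⟩ := hP
  obtain ⟨M, m1, m2, m3, m4⟩ := hQ
  obtain ⟨N, p1, p2⟩ := pglue A B hB L M (by rw [l2, m2]) (by rw [l3, m3])
  refine ⟨N, ?_, (p1 _).trans l2, (p1 _).trans l3, ?_⟩
  · intro v
    rcases p_cases A B v with ⟨a, rfl⟩ | ⟨b, rfl⟩
    · rw [p1, l1]
    · rw [p2, m1]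
  · intro φ hφ hmem
    rcases List.mem_append.1 hmem with h | h
    · refine l4 (fun a => φ (Sum.inl a : A.pV B)) ⟨fun a => ?_, fun a => hφ.2.1 _,
        fun u v huv => hφ.2.2 _ _ (par_adj_l A B huv)⟩ h
      rw [← p1]; exact hφ.1 _
    · refine m4 (fun b => φ (A.pmap B b)) ⟨fun b => ?_, fun a => hφ.2.1 _,
        fun u v huv => hφ.2.2 _ _ (par_adj_r A B hAn huv)⟩ ?_
      · rw [← p2]; exact hφ.1 _
      · have e1 : A.pmap B B.x = (A.parallel B).x := pmap_x A B
        have e2 : A.pmap B B.y = (A.parallel B).y := pmap_y A B hB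
        simp only [e1, e2]
        exact h

lemma bad_exists (m e q : ℕ) (hq : 0 < q) (he : q * e < m) (D B : Finset ℕ)
    (hD : D.card = 2 * m + e) (hB : B.card = m + e) (hDB : Disjoint D B)
    (P : List (Finset ℕ × Finset ℕ))
    (hP : ∀ s ∈ P, (s.1 ⊆ D ∧ s.1.card = m) ∧ s.2 ⊆ D ∧ s.2.card = m) :
    ∃ A, IsSP A ∧ Pot A (2 * q + 1) ∧ Bad A m (2 * m + e) D P := by
  obtain ⟨R, hR, hRp⟩ := path_exists (2 * q)
  induction P with
  | nil =>
    obtain ⟨U, hU, hUm⟩ := Finset.exists_subset_card_eq (show m ≤ D.card by omega)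
    obtain ⟨L, l1, l2, l3, l4⟩ := bad_path m e q hq he hRp D B U U hD hB hDB hU hUm hU hUm
    exact ⟨R, hR, pot_path hRp, L, l1, l2, l3, fun φ _ => List.not_mem_nil⟩
  | cons s P ih =>
    obtain ⟨A, hA, hAp, hAb⟩ := ih (fun s hs => hP s (List.mem_cons_of_mem _ hs))
    obtain ⟨⟨a1, a2⟩, a3, a4⟩ := hP s List.mem_cons_self
    have := bad_path m e q hq he hRp D B s.1 s.2 hD hB hDB a1 a2 a3 a4
    exact ⟨R.parallel A, .parallel R A _ hR hA (equiv_refl _), pot_par (sp_ne hA) (pot_path hRp) hAp,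
      bad_par (sp_ne hR) (sp_ne hA) this hAb⟩

lemma lower (m e q : ℕ) (hq : 0 < q) (he : q * e < m) :
    ∃ A, IsSP A ∧ ((4 * q + 2 : ℕ) : ℕ∞) ≤ A.G.egirth ∧ ¬ Choosable A.G (2 * m + e) m := by
  let D := Finset.range (2 * m + e)
  let B := Finset.Ico (2 * m + e) (3 * m + 2 * e)
  have hDB : Disjoint D B := by
    rw [Finset.disjoint_left]
    intro x hx hx'
    simp only [D, B, Finset.mem_range, Finset.mem_Ico] at hx hx'
    omega
  obtain ⟨A, hA, hp, L, l1, l2, l3, l4⟩ := bad_exists m e q hq he D B (by simp [D])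
    (by simp [B]; omega) hDB ((Finset.powersetCard m D ×ˢ Finset.powersetCard m D).toList) (by
      intro s hs
      rw [Finset.mem_toList, Finset.mem_product, Finset.mem_powersetCard,
        Finset.mem_powersetCard] at hs
      exact hs)
  refine ⟨A, hA, ?_, fun hc => ?_⟩
  · have := pot_girth hp
    rwa [show 2 * (2 * q + 1) = 4 * q + 2 by ring] at this
  · obtain ⟨φ, hφ⟩ := hc L l1
    refine l4 φ hφ ?_
    rw [Finset.mem_toList, Finset.mem_product, Finset.mem_powersetCard, Finset.mem_powersetCard]
    exact ⟨⟨l2 ▸ hφ.1 _, hφ.2.1 _⟩, l3 ▸ hφ.1 _, hφ.2.1 _⟩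

lemma choosable_mono {V : Type} {G : SimpleGraph V} {a b m : ℕ} (h : a ≤ b)
    (hc : Choosable G a m) : Choosable G b m := by
  intro L hL
  choose M hM hMc using fun v => Finset.exists_subset_card_eq (show a ≤ (L v).card by rw [hL]; exact h)
  obtain ⟨φ, h1, h2⟩ := hc M hMc
  exact ⟨φ, fun v => (h1 v).trans (hM v), h2⟩

end SPChoice

/-- Theorem 1: for `k ∈ {4q-1, 4q, 4q+1, 4q+2}`, the strong fractional choice
number of the class of series-parallel graphs of girth at least `k` is exactly
`2 + 1/q`: (a) every such graph is `(⌈(2+1/q)m⌉, m)`-choosable for every `m`;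
(b) for every `r < 2 + 1/q` some graph in the class fails to be
`(⌈rm⌉, m)`-choosable for some `m`. -/
theorem stmt_8 (q k : ℕ) (hq : 0 < q)
    (hk : k ∈ ({4 * q - 1, 4 * q, 4 * q + 1, 4 * q + 2} : Set ℕ)) :
    (∀ m : ℕ, 0 < m → ∀ A : TTGraph, IsSP A → (k : ℕ∞) ≤ A.G.egirth →
      Choosable A.G ⌈((2 : ℝ) + 1 / q) * m⌉₊ m) ∧
    (∀ r : ℝ, r < 2 + 1 / q → ∃ m : ℕ, 0 < m ∧
      ∃ A : TTGraph, IsSP A ∧ (k : ℕ∞) ≤ A.G.egirth ∧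
        ¬ Choosable A.G ⌈r * m⌉₊ m) := by
  have hq' : (0 : ℝ) < q := by exact_mod_cast hq
  have hk' : 4 * q ≤ k + 1 ∧ k ≤ 4 * q + 2 := by
    simp only [Set.mem_insert_iff, Set.mem_singleton_iff] at hk
    omega
  constructor
  · intro m hm A hA hg
    have h1 := Nat.le_ceil (((2 : ℝ) + 1 / q) * m)
    set a := ⌈((2 : ℝ) + 1 / q) * m⌉₊ with ha
    have h2 : (2 * (q : ℝ) + 1) * m ≤ q * a := by
      calc (2 * (q : ℝ) + 1) * m = q * (((2 : ℝ) + 1 / q) * m) := by field_simp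
        _ ≤ q * a := mul_le_mul_of_nonneg_left h1 hq'.le
    have h3 : (2 * q + 1) * m ≤ q * a := by exact_mod_cast h2
    have h4 : 2 * m ≤ a := by
      by_contra hlt
      have : q * a ≤ q * (2 * m) := Nat.mul_le_mul_left q (by omega)
      nlinarith
    obtain ⟨e, he⟩ := Nat.exists_eq_add_of_le h4
    rw [he] at h3 ⊢
    exact SPChoice.upper hq (by nlinarith) hk'.1 hA hg
  · intro r hr
    obtain ⟨n, hn⟩ := exists_nat_ge (1 / (2 + 1 / (q : ℝ) - r))
    have hδ : 0 < 2 + 1 / (q : ℝ) - r := by linarith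
    rw [div_le_iff₀ hδ] at hn
    obtain ⟨A, hA, hg, hc⟩ := SPChoice.lower (q * n + 1) n q hq (by omega)
    refine ⟨q * n + 1, by omega, A, hA, le_trans (by exact_mod_cast hk'.2) hg, fun h => hc ?_⟩
    refine SPChoice.choosable_mono (Nat.ceil_le.2 ?_) h
    push_cast
    have hq1 : (1 : ℝ) ≤ q := by exact_mod_cast hq
    have e1 : 1 / (q : ℝ) ≤ 1 := by rw [div_le_one hq']; exact hq1
    have e2 : (n : ℝ) ≤ q * n + 1 := by nlinarith [Nat.cast_nonneg (α := ℝ) n]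
    have e3 : 1 / (q : ℝ) * (q * n + 1) = n + 1 / q := by field_simp
    have e4 : 1 ≤ (q * n + 1) * (2 + 1 / (q : ℝ) - r) :=
      hn.trans (mul_le_mul_of_nonneg_right e2 hδ.le)
    linarith
end
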